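/- arXiv:1807.02661 — 8 statements merged into one kernel-verified Lean document; each statement's English description precedes it below -/
import Mathlib

section
/- If lim_{V→∞} f'(V) = ∞, then lim_{V→∞} (f(2V) − 2f(V)) = ∞. In other words, L = ∞ implies M = ∞. -/
open Filter Set

/-!
The tangent line of `f` at `V` meets the vertical axis at height `-(V f'(V) - f V)`. It lies below
`f` at a fixed point `b > 0`, so `V f'(V) - f V ≥ b f'(V) - f b → ∞`. It also lies below `f` at
`c V`, and this says `f (c V) - c f V ≥ (c - 1) (V f'(V) - f V)`.
-/

section TangentLine

variable {S : Set ℝ} {f : ℝ → ℝ}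

theorem convexOn_add_mul_sub_le_of_hasDerivWithinAt {f' x y : ℝ} (hf : ConvexOn ℝ S f)
    (hx : x ∈ S) (hy : y ∈ S) (hf' : HasDerivWithinAt f f' S x) :
    f x + f' * (y - x) ≤ f y := by
  rcases lt_trichotomy x y with hxy | rfl | hyx
  · have hslope := hf.le_slope_of_hasDerivWithinAt hx hy hxy hf'
    rw [slope_def_field, le_div_iff₀ (sub_pos.2 hxy)] at hslope
    linarith
  · simp
  · have hslope := hf.slope_le_of_hasDerivWithinAt hy hx hyx hf'
    rw [slope_def_field, div_le_iff₀ (sub_pos.2 hyx)] at hslope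
    linarith

theorem eventually_add_deriv_mul_sub_le (hf : ConvexOn ℝ S f) (hS : S ∈ atTop)
    (hL : Tendsto (deriv f) atTop atTop) :
    ∀ᶠ V in atTop, ∀ y ∈ S, f V + deriv f V * (y - V) ≤ f y := by
  filter_upwards [hS, hL.eventually_ne_atTop 0] with V hV hderiv y hy
  have hdiff : DifferentiableAt ℝ f V := differentiableAt_of_deriv_ne_zero hderiv
  exact convexOn_add_mul_sub_le_of_hasDerivWithinAt hf hV hy hdiff.hasDerivAt.hasDerivWithinAt

theorem tendsto_mul_deriv_sub_atTop (hf : ConvexOn ℝ S f) (hS : S ∈ atTop)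
    (hL : Tendsto (deriv f) atTop atTop) :
    Tendsto (fun V => V * deriv f V - f V) atTop atTop := by
  obtain ⟨b, hbS, hb⟩ : ∃ b ∈ S, 0 < b :=
    (Eventually.and hS (eventually_gt_atTop 0)).exists
  have hlower : Tendsto (fun V => b * deriv f V - f b) atTop atTop :=
    tendsto_atTop_add_const_right _ _ (hL.const_mul_atTop hb)
  refine tendsto_atTop_mono' _ ?_ hlower
  filter_upwards [eventually_add_deriv_mul_sub_le hf hS hL] with V htangent
  linarith [htangent b hbS]

end TangentLine

theorem stmt_2_general {S : Set ℝ} {f : ℝ → ℝ} {c : ℝ} (hf : ConvexOn ℝ S f) (hS : S ∈ atTop)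
    (hL : Tendsto (deriv f) atTop atTop) (hc : 1 < c) :
    Tendsto (fun V => f (c * V) - c * f V) atTop atTop := by
  have hlower : Tendsto (fun V => (c - 1) * (V * deriv f V - f V)) atTop atTop :=
    (tendsto_mul_deriv_sub_atTop hf hS hL).const_mul_atTop (sub_pos.2 hc)
  have hcS : ∀ᶠ V in atTop, c * V ∈ S :=
    (tendsto_id.const_mul_atTop (zero_lt_one.trans hc)).eventually hS
  refine tendsto_atTop_mono' _ ?_ hlower
  filter_upwards [eventually_add_deriv_mul_sub_le hf hS hL, hcS] with V htangent hcV
  linarith [htangent (c * V) hcV]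

/-- If lim_{V→∞} f'(V) = ∞, then lim_{V→∞} (f(2V) − 2f(V)) = ∞.
In other words, L = ∞ implies M = ∞. -/
theorem stmt_2 (f : ℝ → ℝ)
    (hf_even : ∀ x, f (-x) = f x)
    (hf_conv : StrictConvexOn ℝ Set.univ f)
    (hf_smooth : ContDiff ℝ 1 f)
    (hf_pos : ∀ x, 0 < f x)
    (hL : Tendsto (deriv f) atTop atTop) :
    Tendsto (fun V : ℝ => f (2 * V) - 2 * f V) atTop atTop :=
  stmt_2_general hf_conv.convexOn univ_mem hL one_lt_two
end

section
/- Suppose L = lim_{V→∞} f'(V) is finite. Then for each fixed V₁ > 0, the equilibrium point Ṽ(V₁, V₂) converges to V*(V₁) as V₂ → ∞. -/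
open Filter Set

/-!
The equilibrium point is the zero of `x ↦ f' x + f' (x + V₁) + f' (x + V₁ + V₂)`. As `V₂ → ∞`, these
increasing functions converge pointwise to `x ↦ f' x + f' (x + V₁) + L`, which is strictly
increasing with zero `V*`. Evaluated at a point on either side of `V*`, the limit is nonzero, so for
large `V₂` the approximating functions have the same sign there, which traps their zero.
-/

theorem tendsto_of_tendsto_apply_of_monotone {ι α β : Type*}
    [LinearOrder α] [TopologicalSpace α] [OrderTopology α]
    [LinearOrder β] [TopologicalSpace β] [OrderClosedTopology β]
    {l : Filter ι} {F : ι → α → β} {G : α → β} {x : ι → α} {a : α}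
    (hF : ∀ᶠ i in l, Monotone (F i)) (hG : StrictMono G)
    (hFG : ∀ y, Tendsto (fun i => F i y) l (nhds (G y)))
    (hx : Tendsto (fun i => F i (x i)) l (nhds (G a))) :
    Tendsto x l (nhds a) := by
  refine tendsto_order.2 ⟨fun b hb => ?_, fun b hb => ?_⟩
  · filter_upwards [hF, (hFG b).eventually_lt hx (hG hb)] with i hmono hlt
    exact hmono.reflect_lt hlt
  · filter_upwards [hF, hx.eventually_lt (hFG b) (hG hb)] with i hmono hlt
    exact hmono.reflect_lt hlt

theorem stmt_5_general {α β : Type*}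
    [AddCommGroup α] [LinearOrder α] [IsOrderedAddMonoid α] [TopologicalSpace α] [OrderTopology α]
    [AddCommGroup β] [LinearOrder β] [IsOrderedAddMonoid β] [TopologicalSpace β]
    [OrderClosedTopology β] [ContinuousAdd β]
    {g : α → β} (hg : StrictMono g) {L : β} (hL : Tendsto g atTop (nhds L))
    {V₁ : α} {Vt : α → α}
    (hVt : ∀ᶠ V₂ in atTop, g (Vt V₂) + g (Vt V₂ + V₁) + g (Vt V₂ + V₁ + V₂) = 0)
    {Vs : α} (hVs : g Vs + g (Vs + V₁) = -L) :
    Tendsto Vt atTop (nhds Vs) := by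
  have shift_strictMono (c : α) : StrictMono fun x => g (x + c) :=
    hg.comp (add_left_strictMono (a := c))
  have sum_monotone (V₂ : α) : Monotone fun x => g x + g (x + V₁) + g (x + V₁ + V₂) :=
    ((hg.add (shift_strictMono V₁)).add
      ((shift_strictMono V₂).comp add_left_strictMono)).monotone
  have limit_strictMono : StrictMono fun x => g x + g (x + V₁) + L :=
    (hg.add (shift_strictMono V₁)).add_const L
  have sum_tendsto (x : α) :
      Tendsto (fun V₂ => g x + g (x + V₁) + g (x + V₁ + V₂)) atTop
        (nhds (g x + g (x + V₁) + L)) :=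
    (hL.comp (tendsto_atTop_add_const_left _ _ tendsto_id)).const_add _
  have limit_eq_zero : g Vs + g (Vs + V₁) + L = 0 := by rw [hVs, neg_add_cancel]
  refine tendsto_of_tendsto_apply_of_monotone (.of_forall sum_monotone) limit_strictMono
    sum_tendsto ?_
  rw [limit_eq_zero]
  exact tendsto_const_nhds.congr' (hVt.mono fun _ h => h.symm)

/-- Suppose L = lim_{V→∞} f'(V) is finite. Then for each fixed V₁ > 0,
the equilibrium point Ṽ(V₁, V₂) converges to V*(V₁) as V₂ → ∞. -/
theorem stmt_5 (f : ℝ → ℝ)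
    (hf_even : ∀ x, f (-x) = f x)
    (hf_conv : StrictConvexOn ℝ Set.univ f)
    (hf_smooth : ContDiff ℝ 1 f)
    (hf_pos : ∀ x, 0 < f x)
    (L : ℝ) (hL : Tendsto (deriv f) atTop (nhds L))
    (Vt : ℝ → ℝ → ℝ)
    (hVt : ∀ V₁ V₂ : ℝ, 0 < V₁ → 0 < V₂ →
      deriv f (Vt V₁ V₂) + deriv f (Vt V₁ V₂ + V₁) + deriv f (Vt V₁ V₂ + V₁ + V₂) = 0)
    (Vs : ℝ → ℝ)
    (hVs : ∀ V₁ : ℝ, 0 < V₁ → deriv f (Vs V₁) + deriv f (Vs V₁ + V₁) = -L) :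
    ∀ V₁ : ℝ, 0 < V₁ →
      Tendsto (fun V₂ => Vt V₁ V₂) atTop (nhds (Vs V₁)) :=
  have deriv_strictMono : StrictMono (deriv f) := strictMonoOn_univ.1 <|
    hf_conv.strictMonoOn_deriv fun x _ => hf_smooth.differentiable one_ne_zero x
  fun V₁ hV₁ => stmt_5_general deriv_strictMono hL
    ((eventually_gt_atTop 0).mono fun V₂ => hVt V₁ V₂ hV₁) (hVs V₁ hV₁)
end

section
/- Suppose L = lim_{V→∞} f'(V) is finite. Then the function V₁ ↦ V*(V₁) is strictly decreasing on (0, ∞), V*(V₁) → −∞ as V₁ → ∞, and V*(V₁) + V₁ → 0 as V₁ → ∞. -/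
open Filter Set

/-!
Write `g` for the odd, strictly increasing function `f'`, so that `g` lies strictly between its
limits `-L` and `L`. If `V*` did not decrease, then `g (V*) + g (V* + V₁)` would strictly increase
with `V₁`, so it could not be constant. Since `-L < g (V*)`, the defining equation gives
`g (V* + V₁) < 0`, that is, `V* < -V₁`; hence `V* → -∞`. Then `g (V*) → -L`, which leaves
`g (V* + V₁) → 0 = g 0`, and strict monotonicity turns this into `V* + V₁ → 0`.
-/

open scoped Topology

section Order

variable {α β : Type*} [LinearOrder α]

theorem lt_of_strictMono_of_tendsto_atTop [NoMaxOrder α] [TopologicalSpace β] [Preorder β]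
    [OrderClosedTopology β] {g : α → β} {L : β} (hg : StrictMono g)
    (hL : Tendsto g atTop (𝓝 L)) (x : α) : g x < L := by
  obtain ⟨y, hxy⟩ := exists_gt x
  exact (hg hxy).trans_le (hg.monotone.ge_of_tendsto hL y)

theorem tendsto_nhds_of_strictMono_comp {ι : Type*} [TopologicalSpace α] [OrderTopology α]
    [TopologicalSpace β] [LinearOrder β] [OrderClosedTopology β] {g : α → β} {u : ι → α}
    {l : Filter ι} {x : α} (hg : StrictMono g) (hgu : Tendsto (fun i ↦ g (u i)) l (𝓝 (g x))) :
    Tendsto u l (𝓝 x) :=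
  tendsto_order.2
    ⟨fun _ ha ↦ (hgu.eventually_const_lt (hg ha)).mono fun _ ↦ hg.lt_iff_lt.1,
      fun _ ha ↦ (hgu.eventually_lt_const (hg ha)).mono fun _ ↦ hg.lt_iff_lt.1⟩

end Order

section Odd

theorem odd_deriv_of_even {𝕜 F : Type*} [NontriviallyNormedField 𝕜] [NormedAddCommGroup F]
    [NormedSpace 𝕜 F] {f : 𝕜 → F} (hf : Function.Even f) : Function.Odd (deriv f) := by
  intro x
  have h : deriv f x = -deriv f (-x) := by
    simpa only [hf.eq] using deriv_comp_neg f x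
  rw [h, neg_neg]

variable {G H : Type*} [AddCommGroup G] [LinearOrder G] [IsOrderedAddMonoid G]

theorem tendsto_atBot_neg_of_odd [TopologicalSpace H] [InvolutiveNeg H] [ContinuousNeg H]
    {g : G → H} {L : H} (hodd : Function.Odd g) (hL : Tendsto g atTop (𝓝 L)) :
    Tendsto g atBot (𝓝 (-L)) := by
  refine (hL.comp tendsto_neg_atBot_atTop).neg.congr fun x ↦ ?_
  rw [Function.comp_apply, hodd.eq, neg_neg]

variable [AddCommGroup H] [LinearOrder H] [IsOrderedAddMonoid H] [TopologicalSpace H]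
  [OrderClosedTopology H]

theorem neg_lt_of_odd_of_strictMono [Nontrivial G] {g : G → H} {L : H} (hodd : Function.Odd g)
    (hg : StrictMono g) (hL : Tendsto g atTop (𝓝 L)) (x : G) : -L < g x := by
  rw [neg_lt, ← hodd.eq]
  exact lt_of_strictMono_of_tendsto_atTop hg hL (-x)

theorem lt_neg_of_map_add_map_add_eq_neg [Nontrivial G] {g : G → H} {L : H}
    (hodd : Function.Odd g) (hg : StrictMono g) (hL : Tendsto g atTop (𝓝 L)) {x v : G}
    (hx : g x + g (x + v) = -L) : x < -v := by
  have hneg : g (x + v) < 0 := by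
    have hlt : g x + g (x + v) < g x := hx ▸ neg_lt_of_odd_of_strictMono hodd hg hL x
    exact add_lt_iff_neg_left.1 hlt
  rw [← hodd.map_zero, hg.lt_iff_lt] at hneg
  exact lt_neg_iff_add_neg.2 hneg

theorem tendsto_atBot_of_map_add_map_add_eq_neg [Nontrivial G] {g : G → H} {L : H}
    {u : G → G} (hodd : Function.Odd g) (hg : StrictMono g) (hL : Tendsto g atTop (𝓝 L))
    (hu : ∀ᶠ v in atTop, g (u v) + g (u v + v) = -L) :
    Tendsto u atTop atBot :=
  tendsto_atBot_mono' atTop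
    (hu.mono fun _ hv ↦ (lt_neg_of_map_add_map_add_eq_neg hodd hg hL hv).le)
    tendsto_neg_atTop_atBot

end Odd

section ShiftEquation

theorem strictAntiOn_of_map_add_map_add_eq {M N : Type*}
    [AddCommMonoid M] [LinearOrder M] [IsOrderedCancelAddMonoid M]
    [AddCommMonoid N] [PartialOrder N] [IsOrderedCancelAddMonoid N]
    {g : M → N} {u : M → M} {s : Set M} {c : N} (hg : StrictMono g)
    (hu : ∀ v ∈ s, g (u v) + g (u v + v) = c) : StrictAntiOn u s := by
  intro a ha b hb hab
  by_contra! hle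
  have hlt : c < c := calc
    c = g (u a) + g (u a + a) := (hu a ha).symm
    _ < g (u b) + g (u b + b) :=
      add_lt_add_of_le_of_lt (hg.monotone hle) (hg (add_lt_add_of_le_of_lt hle hab))
    _ = c := hu b hb
  exact hlt.false

variable {G H : Type*} [AddCommGroup G] [LinearOrder G] [IsOrderedAddMonoid G] [Nontrivial G]
  [TopologicalSpace G] [OrderTopology G] [AddCommGroup H] [LinearOrder H] [IsOrderedAddMonoid H]
  [TopologicalSpace H] [OrderTopology H] {g : G → H} {L : H} {u : G → G}

theorem tendsto_add_self_of_map_add_map_add_eq_neg (hodd : Function.Odd g) (hg : StrictMono g)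
    (hL : Tendsto g atTop (𝓝 L)) (hu : ∀ᶠ v in atTop, g (u v) + g (u v + v) = -L) :
    Tendsto (fun v ↦ u v + v) atTop (𝓝 0) := by
  have hgu : Tendsto (fun v ↦ g (u v)) atTop (𝓝 (-L)) :=
    (tendsto_atBot_neg_of_odd hodd hL).comp
      (tendsto_atBot_of_map_add_map_add_eq_neg hodd hg hL hu)
  have hsub : Tendsto (fun v ↦ -L - g (u v)) atTop (𝓝 (g 0)) := by
    simpa only [sub_self, hodd.map_zero] using hgu.const_sub (-L)
  exact tendsto_nhds_of_strictMono_comp hg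
    (hsub.congr' (hu.mono fun _ hv ↦ sub_eq_of_eq_add' hv.symm))

theorem stmt_6_general (hodd : Function.Odd g) (hg : StrictMono g)
    (hL : Tendsto g atTop (𝓝 L)) (hu : ∀ v, 0 < v → g (u v) + g (u v + v) = -L) :
    StrictAntiOn u (Ioi 0) ∧ Tendsto u atTop atBot ∧
      Tendsto (fun v ↦ u v + v) atTop (𝓝 0) := by
  have hu' : ∀ᶠ v in atTop, g (u v) + g (u v + v) = -L := (eventually_gt_atTop 0).mono hu
  exact ⟨strictAntiOn_of_map_add_map_add_eq hg hu,
    tendsto_atBot_of_map_add_map_add_eq_neg hodd hg hL hu',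
    tendsto_add_self_of_map_add_map_add_eq_neg hodd hg hL hu'⟩

end ShiftEquation

/-- Suppose L = lim_{V→∞} f'(V) is finite. Then the function V₁ ↦ V*(V₁)
is strictly decreasing on (0, ∞), V*(V₁) → −∞ as V₁ → ∞, and V*(V₁) + V₁ → 0 as
V₁ → ∞. -/
theorem stmt_6 (f : ℝ → ℝ)
    (hf_even : ∀ x, f (-x) = f x)
    (hf_conv : StrictConvexOn ℝ Set.univ f)
    (hf_smooth : ContDiff ℝ 1 f)
    (hf_pos : ∀ x, 0 < f x)
    (L : ℝ) (hL : Tendsto (deriv f) atTop (nhds L))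
    (Vs : ℝ → ℝ)
    (hVs : ∀ V₁ : ℝ, 0 < V₁ → deriv f (Vs V₁) + deriv f (Vs V₁ + V₁) = -L) :
    StrictAntiOn Vs (Set.Ioi (0 : ℝ)) ∧
    Tendsto Vs atTop atBot ∧
    Tendsto (fun V₁ => Vs V₁ + V₁) atTop (nhds 0) := by
  have hmono : StrictMono (deriv f) := strictMonoOn_univ.mp <|
    hf_conv.strictMonoOn_deriv fun x _ ↦ hf_smooth.differentiable one_ne_zero x
  exact stmt_6_general (odd_deriv_of_even hf_even) hmono hL hVs
end

section
/- Suppose L = lim_{V→∞} f'(V) is finite and M = lim_{V→∞} (f(2V) − 2f(V)) is finite. Then for each fixed V₁ > 0, μ(V₁, V₂) converges as V₂ → ∞ to the finite value 2f(V₁/2) − f(V*(V₁)) − f(V*(V₁) + V₁) − V*(V₁)·L − M. -/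
open Filter Set

/-- The perimeter difference μ(V₁,V₂) between the triple interval and the double
interval, expressed via the equilibrium point Ṽ = Vt V₁ V₂. -/
noncomputable def mu (f : ℝ → ℝ) (Vt : ℝ → ℝ → ℝ) (V₁ V₂ : ℝ) : ℝ :=
  2 * f (V₁ / 2) + 2 * f ((V₁ + V₂) / 2)
    - f (Vt V₁ V₂) - f (Vt V₁ V₂ + V₁) - f (Vt V₁ V₂ + V₁ + V₂)

/-!
Write `W = V₁ + V₂`. The equilibrium point minimizes the convex function
`x ↦ f x + f (x + V₁) + f (x + W)`. Since `f (x + W) - f W → x * L`, these functions minus `f W`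
converge pointwise to `x ↦ f x + f (x + V₁) + x * L`, which is minimal at `V*`. Their minimal
values converge as well: they are at most the values at `V*`, and they are bounded below by means
of the tangent lines at `V*` and at a fixed equilibrium point `b`, to the right of which the
functions for all larger `W` are nondecreasing. Convergence of the equilibrium points is not needed.
The remaining part `2 * f (W / 2) - f W` of `μ` tends to `-M`.
-/

open Topology

theorem tendsto_comp_add_sub_of_tendsto_deriv {E : Type*} [NormedAddCommGroup E] [NormedSpace ℝ E]
    {f : ℝ → E} {c : E} (hf : ∀ᶠ x in atTop, DifferentiableAt ℝ f x)
    (hc : Tendsto (deriv f) atTop (𝓝 c)) (a : ℝ) :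
    Tendsto (fun x => f (a + x) - f x) atTop (𝓝 (a • c)) := by
  rw [Metric.tendsto_nhds]
  intro ε hε
  obtain ⟨δ, hδ, hδε⟩ := exists_pos_mul_lt hε |a|
  obtain ⟨X, hX⟩ := eventually_atTop.1
    (hf.and (hc.eventually (Metric.closedBall_mem_nhds c hδ)))
  filter_upwards [eventually_ge_atTop X, eventually_ge_atTop (X - a)] with x hx hxa
  have hderiv (y : ℝ) (hy : y ∈ Ici X) : HasDerivAt (fun y => f y - y • c) (deriv f y - c) y := by
    simpa only [one_smul] using (hX y hy).1.hasDerivAt.fun_sub ((hasDerivAt_id' y).smul_const c)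
  have hmean := (convex_Ici X).norm_image_sub_le_of_norm_hasDerivWithin_le
    (fun y hy => (hderiv y hy).hasDerivWithinAt)
    (fun y hy => mem_closedBall_iff_norm.1 (hX y hy).2) hx (show X ≤ a + x by linarith)
  rw [dist_eq_norm]
  calc ‖f (a + x) - f x - a • c‖ = ‖f (a + x) - (a + x) • c - (f x - x • c)‖ := by
        congr 1; module
    _ ≤ δ * ‖a + x - x‖ := hmean
    _ < ε := by rwa [add_sub_cancel_right, Real.norm_eq_abs, mul_comm]

section Convex

variable {s : Set ℝ} {f : ℝ → ℝ} {x y z : ℝ}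

theorem add_deriv_mul_sub_le_of_convexOn (hf : ConvexOn ℝ s f) (hx : x ∈ s) (hy : y ∈ s)
    (hfx : DifferentiableAt ℝ f x) : f x + deriv f x * (y - x) ≤ f y := by
  rcases lt_trichotomy x y with hxy | rfl | hyx
  · have := hf.deriv_le_slope hx hy hxy hfx
    rw [slope_def_field, le_div_iff₀ (sub_pos.2 hxy)] at this
    linarith
  · simp
  · have := hf.slope_le_deriv hy hx hyx hfx
    rw [slope_def_field, div_le_iff₀ (sub_pos.2 hyx)] at this
    linarith

theorem isMinOn_of_convexOn_of_deriv_eq_zero (hf : ConvexOn ℝ s f) (hx : x ∈ s)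
    (hfx : DifferentiableAt ℝ f x) (hx0 : deriv f x = 0) : IsMinOn f s x :=
  isMinOn_iff.2 fun y hy => by
    simpa only [hx0, zero_mul, add_zero] using add_deriv_mul_sub_le_of_convexOn hf hx hy hfx

theorem add_deriv_mul_sub_le_of_convexOn_of_deriv_nonpos_of_deriv_nonneg (hf : ConvexOn ℝ s f)
    (hx : x ∈ s) (hy : y ∈ s) (hz : z ∈ s) (hfx : DifferentiableAt ℝ f x)
    (hfz : DifferentiableAt ℝ f z) (hx0 : deriv f x ≤ 0) (hz0 : 0 ≤ deriv f z) :
    f x + deriv f x * (z - x) ≤ f y := by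
  rcases le_total y z with hyz | hzy
  · calc f x + deriv f x * (z - x) ≤ f x + deriv f x * (y - x) := by
          gcongr f x + ?_
          exact mul_le_mul_of_nonpos_left (sub_le_sub_right hyz x) hx0
      _ ≤ f y := add_deriv_mul_sub_le_of_convexOn hf hx hy hfx
  · calc f x + deriv f x * (z - x) ≤ f z := add_deriv_mul_sub_le_of_convexOn hf hx hz hfx
      _ ≤ f z + deriv f z * (y - z) :=
          le_add_of_nonneg_right (mul_nonneg hz0 (sub_nonneg.2 hzy))
      _ ≤ f y := add_deriv_mul_sub_le_of_convexOn hf hz hy hfz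

end Convex

theorem deriv_add_comp_add_const {𝕜 F : Type*} [NontriviallyNormedField 𝕜] [NormedAddCommGroup F]
    [NormedSpace 𝕜 F] {g f : 𝕜 → F} {a x : 𝕜} (hg : DifferentiableAt 𝕜 g x)
    (hf : DifferentiableAt 𝕜 f (x + a)) :
    deriv (fun y => g y + f (y + a)) x = deriv g x + deriv f (x + a) := by
  rw [deriv_fun_add hg (differentiableAt_comp_add_const.2 hf), deriv_comp_add_const]

theorem tendsto_add_comp_add_sub_of_deriv_add_eq_zero {ι : Type*} {l : Filter ι}
    {W t : ι → ℝ} {f g : ℝ → ℝ} {L v : ℝ} (hg : ConvexOn ℝ univ g) (hg' : Differentiable ℝ g)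
    (hf : ConvexOn ℝ univ f) (hf' : Differentiable ℝ f) (hL : Tendsto (deriv f) atTop (𝓝 L))
    (hv : deriv g v = -L) (hW : Tendsto W l atTop)
    (ht : ∀ᶠ i in l, deriv g (t i) + deriv f (t i + W i) = 0) :
    Tendsto (fun i => g (t i) + f (t i + W i) - f (W i)) l (𝓝 (g v + v * L)) := by
  rcases l.eq_or_neBot with rfl | _
  · exact tendsto_bot
  let φ (i : ι) (x : ℝ) : ℝ := g x + f (x + W i)
  have hφ (i : ι) : ConvexOn ℝ univ (φ i) := hg.add (hf.translate_left (W i))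
  have hφ' (i : ι) : Differentiable ℝ (φ i) := by fun_prop
  have deriv_φ (i : ι) (x : ℝ) : deriv (φ i) x = deriv g x + deriv f (x + W i) :=
    deriv_add_comp_add_const (hg' x) (hf' (x + W i))
  have hmono : Monotone (deriv f) := monotoneOn_univ.1 (hf.monotoneOn_deriv fun x _ => hf' x)
  obtain ⟨i₀, hi₀⟩ := ht.exists
  have hφv : Tendsto (fun i => φ i v - f (W i)) l (𝓝 (g v + v * L)) := by
    simpa only [φ, add_sub_assoc, Function.comp_def, smul_eq_mul] using
      ((tendsto_comp_add_sub_of_tendsto_deriv (.of_forall hf') hL v).comp hW).const_add (g v)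
  have hderivv : Tendsto (fun i => deriv (φ i) v) l (𝓝 0) := by
    simpa only [deriv_φ, hv, Function.comp_def, neg_add_cancel] using
      (hL.comp (tendsto_atTop_add_const_left l v hW)).const_add (-L)
  have hlower :
      Tendsto (fun i => φ i v - f (W i) + deriv (φ i) v * (t i₀ - v)) l (𝓝 (g v + v * L)) := by
    simpa only [zero_mul, add_zero] using hφv.add (hderivv.mul_const (t i₀ - v))
  refine tendsto_of_tendsto_of_tendsto_of_le_of_le' hlower hφv ?_ ?_
  · filter_upwards [hW.eventually_ge_atTop (W i₀)] with i hi
    have hv0 : deriv (φ i) v ≤ 0 := by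
      linarith [deriv_φ i v, hmono.ge_of_tendsto hL (v + W i)]
    have hb0 : 0 ≤ deriv (φ i) (t i₀) := by
      linarith [deriv_φ i (t i₀), hmono (add_le_add_right hi (t i₀))]
    linarith [add_deriv_mul_sub_le_of_convexOn_of_deriv_nonpos_of_deriv_nonneg (hφ i) (mem_univ v)
      (mem_univ (t i)) (mem_univ (t i₀)) (hφ' i v) (hφ' i (t i₀)) hv0 hb0]
  · filter_upwards [ht] with i hi
    have hmin := isMinOn_of_convexOn_of_deriv_eq_zero (hφ i) (mem_univ (t i)) (hφ' i (t i))
      ((deriv_φ i (t i)).trans hi)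
    exact sub_le_sub_right (hmin (mem_univ v)) (f (W i))

theorem stmt_7_general {f : ℝ → ℝ} (hf : ConvexOn ℝ univ f) (hf' : Differentiable ℝ f)
    {L M : ℝ} (hL : Tendsto (deriv f) atTop (𝓝 L))
    (hM : Tendsto (fun V => f (2 * V) - 2 * f V) atTop (𝓝 M)) {Vt : ℝ → ℝ → ℝ} {V₁ v : ℝ}
    (hVt : ∀ᶠ V₂ in atTop,
      deriv f (Vt V₁ V₂) + deriv f (Vt V₁ V₂ + V₁) + deriv f (Vt V₁ V₂ + V₁ + V₂) = 0)
    (hv : deriv f v + deriv f (v + V₁) = -L) :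
    Tendsto (mu f Vt V₁) atTop (𝓝 (2 * f (V₁ / 2) - f v - f (v + V₁) - v * L - M)) := by
  have hW : Tendsto (fun V₂ => V₁ + V₂) atTop atTop :=
    tendsto_atTop_add_const_left atTop V₁ tendsto_id
  have htriple := tendsto_add_comp_add_sub_of_deriv_add_eq_zero
    (g := fun x => f x + f (x + V₁)) (hf.add (hf.translate_left V₁)) (by fun_prop)
    hf hf' hL ((deriv_add_comp_add_const (hf' v) (hf' (v + V₁))).trans hv) hW
    (hVt.mono fun V₂ h => by rwa [← add_assoc, deriv_add_comp_add_const (hf' _) (hf' _)])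
  have hdouble := hM.comp (hW.atTop_div_const two_pos)
  convert (htriple.const_sub (2 * f (V₁ / 2))).sub hdouble using 2 with V₂
  · simp only [mu, Function.comp_apply, mul_div_cancel₀ _ (two_ne_zero' ℝ), add_assoc]
    ring
  · ring

/-- Suppose L = lim_{V→∞} f'(V) is finite and
M = lim_{V→∞} (f(2V) − 2f(V)) is finite. Then for each fixed V₁ > 0, μ(V₁, V₂)
converges as V₂ → ∞ to the finite value
2f(V₁/2) − f(V*(V₁)) − f(V*(V₁) + V₁) − V*(V₁)·L − M. -/
theorem stmt_7 (f : ℝ → ℝ)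
    (hf_even : ∀ x, f (-x) = f x)
    (hf_conv : StrictConvexOn ℝ Set.univ f)
    (hf_smooth : ContDiff ℝ 1 f)
    (hf_pos : ∀ x, 0 < f x)
    (L : ℝ) (hL : Tendsto (deriv f) atTop (nhds L))
    (M : ℝ) (hM : Tendsto (fun V : ℝ => f (2 * V) - 2 * f V) atTop (nhds M))
    (Vt : ℝ → ℝ → ℝ)
    (hVt : ∀ V₁ V₂ : ℝ, 0 < V₁ → 0 < V₂ →
      deriv f (Vt V₁ V₂) + deriv f (Vt V₁ V₂ + V₁) + deriv f (Vt V₁ V₂ + V₁ + V₂) = 0)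
    (Vs : ℝ → ℝ)
    (hVs : ∀ V₁ : ℝ, 0 < V₁ → deriv f (Vs V₁) + deriv f (Vs V₁ + V₁) = -L) :
    ∀ V₁ : ℝ, 0 < V₁ →
      Tendsto (fun V₂ => mu f Vt V₁ V₂) atTop
        (nhds (2 * f (V₁ / 2) - f (Vs V₁) - f (Vs V₁ + V₁) - Vs V₁ * L - M)) :=
  fun V₁ hV₁ => stmt_7_general hf_conv.convexOn (hf_smooth.differentiable one_ne_zero) hL hM
    ((eventually_gt_atTop 0).mono fun V₂ hV₂ => hVt V₁ V₂ hV₁ hV₂) (hVs V₁ hV₁)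
end

section
/- Suppose L = lim_{V→∞} f'(V) and M = lim_{V→∞} (f(2V) − 2f(V)) are both finite. Then the function μ_ℓ(V₁) = 2f(V₁/2) − f(V*(V₁)) − f(V*(V₁) + V₁) − V*(V₁)·L − M tends to +∞ as V₁ → ∞. Consequently, the set {V₁ > 0 : μ_ℓ(V₁) < 0} is bounded above, so the blowup time is finite. -/
open Filter Set

/-!
Let `f' → L` at `∞` and `f' → -L'` at `-∞`, with `L, L' > 0`; `L' = L` when `f` is even.
Convexity makes `V ↦ f (2 * V) - 2 * f V` increasing on `[0, ∞)`, so `f (2 * V) ≤ 2 * f V + M`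
there. Hence `(f (2 ^ n * V) + M) / (2 ^ n * V)` decreases in `n`; as it tends to the asymptotic
slope `L`, we get `f V ≥ L * V - M`. The equation for `V*` keeps the point `V* + V₁` in a compact
interval, so `V* ≤ 0` for large `V₁`, and then `f V* + V* * L' ≤ f 0`. Therefore `μ_ℓ V₁` is at
least `2 * f (V₁ / 2)` minus a constant, hence at least `L * V₁` minus a constant.
-/

section LinearMinorants

variable {f : ℝ → ℝ}

theorem monotoneOn_map_mul_sub_mul (hf : ConvexOn ℝ (Ici 0) f) {t : ℝ} (ht : 1 ≤ t) :
    MonotoneOn (fun x => f (t * x) - t * f x) (Ici 0) := by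
  intro x (hx : 0 ≤ x) y (hy : 0 ≤ y) hxy
  rcases hxy.eq_or_lt with rfl | hxy
  · exact le_rfl
  have ht₀ : 0 < t := one_pos.trans_le ht
  have hyty : y ≤ t * y := le_mul_of_one_le_left hy ht
  have htxy : t * x < t * y := mul_lt_mul_of_pos_left hxy ht₀
  have hxtx : x ≤ t * x := le_mul_of_one_le_left hx ht
  have hslope : slope f x y ≤ slope f (t * x) (t * y) := calc
    slope f x y ≤ slope f x (t * y) :=
      hf.slope_mono hx ⟨hy, hxy.ne'⟩ ⟨hy.trans hyty, (hxy.trans_le hyty).ne'⟩ hyty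
    _ = slope f (t * y) x := slope_comm ..
    _ ≤ slope f (t * y) (t * x) :=
      hf.slope_mono (hy.trans hyty) ⟨hx, (hxy.trans_le hyty).ne⟩ ⟨hx.trans hxtx, htxy.ne⟩ hxtx
    _ = slope f (t * x) (t * y) := slope_comm ..
  rw [slope_def_field, slope_def_field, ← mul_sub,
    div_le_div_iff₀ (sub_pos.2 hxy) (mul_pos ht₀ (sub_pos.2 hxy))] at hslope
  have hdiff : t * (f y - f x) ≤ f (t * y) - f (t * x) :=
    le_of_mul_le_mul_right (by linarith) (sub_pos.2 hxy)
  linarith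

theorem exists_eventually_affine_le (hf : Differentiable ℝ f) {a : ℝ}
    (ha : ∀ᶠ x in atTop, a ≤ deriv f x) : ∃ b, ∀ᶠ x in atTop, a * x + b ≤ f x := by
  obtain ⟨y, hy⟩ := eventually_atTop.1 ha
  refine ⟨f y - a * y, (eventually_ge_atTop y).mono fun x hx => ?_⟩
  have := (convex_Ici y).mul_sub_le_image_sub_of_le_deriv hf.continuous.continuousOn
    hf.differentiableOn (fun z hz => hy z (interior_subset hz)) y self_mem_Ici x hx hx
  linarith

theorem map_pow_mul_le {t : ℝ} (ht : 0 < t) (hf : ∀ x, 0 < x → f (t * x) ≤ t * f x)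
    {x : ℝ} (hx : 0 < x) (n : ℕ) : f (t ^ n * x) ≤ t ^ n * f x := by
  induction n with
  | zero => simp
  | succ n ih => calc
      f (t ^ (n + 1) * x) = f (t * (t ^ n * x)) := by ring_nf
      _ ≤ t * f (t ^ n * x) := hf _ (by positivity)
      _ ≤ t * (t ^ n * f x) := by gcongr
      _ = t ^ (n + 1) * f x := by ring

theorem mul_le_of_eventually_affine_le {t : ℝ} (ht : 1 < t)
    (hf : ∀ x, 0 < x → f (t * x) ≤ t * f x) {a b : ℝ}
    (hab : ∀ᶠ x in atTop, a * x + b ≤ f x) {x : ℝ} (hx : 0 < x) : a * x ≤ f x := by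
  have ht₀ : 0 < t := one_pos.trans ht
  have hpow : Tendsto (fun n : ℕ => t ^ n) atTop atTop := tendsto_pow_atTop_atTop_of_one_lt ht
  have hlim : Tendsto (fun n : ℕ => a * x + b / t ^ n) atTop (nhds (a * x)) := by
    simpa using (hpow.const_div_atTop b).const_add (a * x)
  refine le_of_tendsto hlim ?_
  filter_upwards [(hpow.atTop_mul_const hx).eventually hab] with n hn
  refine le_of_mul_le_mul_left ?_ (pow_pos ht₀ n)
  calc
    t ^ n * (a * x + b / t ^ n) = a * (t ^ n * x) + b := by field_simp
    _ ≤ f (t ^ n * x) := hn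
    _ ≤ t ^ n * f x := map_pow_mul_le ht₀ hf hx n

theorem mul_le_of_tendsto_deriv {t : ℝ} (ht : 1 < t) (hf : ∀ x, 0 < x → f (t * x) ≤ t * f x)
    (hf_diff : Differentiable ℝ f) {L : ℝ} (hL : Tendsto (deriv f) atTop (nhds L))
    {x : ℝ} (hx : 0 < x) : L * x ≤ f x := by
  rw [← le_div_iff₀ hx]
  refine le_of_forall_lt_imp_le_of_dense fun a ha => (le_div_iff₀ hx).2 ?_
  obtain ⟨b, hb⟩ := exists_eventually_affine_le hf_diff (hL.eventually_const_le ha)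
  exact mul_le_of_eventually_affine_le ht hf hb hx

theorem mul_sub_le_of_tendsto_map_two_mul_sub (hf : ConvexOn ℝ (Ici 0) f)
    (hf_diff : Differentiable ℝ f) {L M : ℝ} (hL : Tendsto (deriv f) atTop (nhds L))
    (hM : Tendsto (fun x => f (2 * x) - 2 * f x) atTop (nhds M)) {x : ℝ} (hx : 0 < x) :
    L * x - M ≤ f x := by
  have hdouble : ∀ y, 0 < y → f (2 * y) - 2 * f y ≤ M := fun y hy =>
    ge_of_tendsto hM <| (eventually_ge_atTop y).mono fun z hyz =>
      monotoneOn_map_mul_sub_mul hf one_le_two hy.le (hy.le.trans hyz) hyz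
  have hderiv : deriv (fun y => f y + M) = deriv f := funext fun y => deriv_add_const M
  have := mul_le_of_tendsto_deriv (f := fun y => f y + M) one_lt_two
    (fun y hy => by linarith [hdouble y hy]) (hf_diff.add_const M) (hderiv ▸ hL) hx
  linarith

end LinearMinorants

theorem eventually_add_mem_Icc_of_monotone {g : ℝ → ℝ} (hg : Monotone g) {l : ℝ}
    (hl : Tendsto g atBot (nhds l)) {v : ℝ → ℝ} (hv : ∀ᶠ x in atTop, g (v x) + g (v x + x) = l)
    {p q : ℝ} (hp : g p < 0) (hq : 0 < g q) : ∀ᶠ x in atTop, v x + x ∈ Icc p q := by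
  have hleft : Tendsto (fun x => g (p - x)) atTop (nhds l) :=
    hl.comp (tendsto_atBot_add_const_left _ p tendsto_neg_atTop_atBot)
  filter_upwards [hv, hleft.eventually_lt_const (show l < l - g p by linarith)] with x hx hpx
  constructor
  · by_contra! hlt
    have hvx : g (v x) ≤ g (p - x) := hg (by linarith)
    linarith [hg hlt.le]
  · by_contra! hlt
    linarith [hg hlt.le, hg.le_of_tendsto hl (v x)]

section EvenFunctions

variable {f : ℝ → ℝ} {L : ℝ}

theorem deriv_odd_of_even (hf : f.Even) : (deriv f).Odd := fun x => by
  have := deriv_comp_neg f x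
  simp only [hf _] at this
  linarith

theorem tendsto_deriv_atBot_of_even (hf : f.Even) (hL : Tendsto (deriv f) atTop (nhds L)) :
    Tendsto (deriv f) atBot (nhds (-L)) := by
  refine (hL.comp tendsto_neg_atBot_atTop).neg.congr fun x => ?_
  simp [deriv_odd_of_even hf x]

theorem pos_of_even_of_tendsto_deriv (hf : f.Even) (hf_conv : StrictConvexOn ℝ univ f)
    (hf_diff : Differentiable ℝ f) (hL : Tendsto (deriv f) atTop (nhds L)) : 0 < L := by
  have hmono : StrictMono (deriv f) :=
    strictMonoOn_univ.1 (hf_conv.strictMonoOn_deriv fun x _ => hf_diff x)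
  calc
    0 = deriv f 0 := (deriv_odd_of_even hf).map_zero.symm
    _ < deriv f 1 := hmono one_pos
    _ ≤ L := hmono.monotone.ge_of_tendsto hL 1

end EvenFunctions

section TwoSlopes

variable {f : ℝ → ℝ} {L L' M : ℝ} {Vs : ℝ → ℝ}

theorem le_two_mul_half_sub_of_mem_Icc (hf_conv : ConvexOn ℝ univ f) (hf_diff : Differentiable ℝ f)
    (htop : Tendsto (deriv f) atTop (nhds L)) (hbot : Tendsto (deriv f) atBot (nhds (-L')))
    (hM : Tendsto (fun V => f (2 * V) - 2 * f V) atTop (nhds M)) {p q v V : ℝ}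
    (hV : 0 < V) (hv : v ≤ 0) (hvV : v + V ∈ Icc p q) :
    L * V + -(3 * M + f 0 + max (f p) (f q)) ≤ 2 * f (V / 2) - f v - f (v + V) - v * L' - M := by
  have hmono : Monotone (deriv f) :=
    monotoneOn_univ.1 (hf_conv.monotoneOn_deriv fun x _ => hf_diff x)
  have hhalf : L * (V / 2) - M ≤ f (V / 2) :=
    mul_sub_le_of_tendsto_map_two_mul_sub (hf_conv.subset (subset_univ _) (convex_Ici 0))
      hf_diff htop hM (half_pos hV)
  have hneg : -L' * (0 - v) ≤ f 0 - f v :=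
    mul_sub_le_image_sub_of_le_deriv hf_diff (hmono.le_of_tendsto hbot) hv
  have hnear : f (v + V) ≤ max (f p) (f q) :=
    hf_conv.le_max_of_mem_Icc (mem_univ p) (mem_univ q) hvV
  linarith

theorem stmt_9_general (hf_conv : ConvexOn ℝ univ f) (hf_diff : Differentiable ℝ f)
    (hL : 0 < L) (hL' : 0 < L') (htop : Tendsto (deriv f) atTop (nhds L))
    (hbot : Tendsto (deriv f) atBot (nhds (-L')))
    (hM : Tendsto (fun V => f (2 * V) - 2 * f V) atTop (nhds M))
    (hVs : ∀ V, 0 < V → deriv f (Vs V) + deriv f (Vs V + V) = -L') :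
    Tendsto (fun V => 2 * f (V / 2) - f (Vs V) - f (Vs V + V) - Vs V * L' - M) atTop atTop ∧
    BddAbove {V | 0 < V ∧ 2 * f (V / 2) - f (Vs V) - f (Vs V + V) - Vs V * L' - M < 0} := by
  have hmono : Monotone (deriv f) :=
    monotoneOn_univ.1 (hf_conv.monotoneOn_deriv fun x _ => hf_diff x)
  obtain ⟨p, hp⟩ := (hbot.eventually_lt_const (neg_lt_zero.2 hL')).exists
  obtain ⟨q, hq⟩ := (htop.eventually_const_lt hL).exists
  have hmem : ∀ᶠ V in atTop, Vs V + V ∈ Icc p q :=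
    eventually_add_mem_Icc_of_monotone hmono hbot ((eventually_gt_atTop 0).mono hVs) hp hq
  have hlin : Tendsto (fun V => L * V + -(3 * M + f 0 + max (f p) (f q))) atTop atTop :=
    tendsto_atTop_add_const_right _ _ (tendsto_id.const_mul_atTop hL)
  have hmain : Tendsto (fun V => 2 * f (V / 2) - f (Vs V) - f (Vs V + V) - Vs V * L' - M)
      atTop atTop := by
    refine tendsto_atTop_mono' _ ?_ hlin
    filter_upwards [hmem, eventually_gt_atTop 0, eventually_ge_atTop q] with V hVmem hV hqV
    exact le_two_mul_half_sub_of_mem_Icc hf_conv hf_diff htop hbot hM hV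
      (by linarith [hVmem.2]) hVmem
  obtain ⟨B, hB⟩ := eventually_atTop.1 (hmain.eventually_ge_atTop 0)
  exact ⟨hmain, B, fun V hV => not_lt.1 fun hBV => (hB V hBV.le).not_gt hV.2⟩

end TwoSlopes

/-- Suppose L = lim_{V→∞} f'(V) and M = lim_{V→∞} (f(2V) − 2f(V)) are
both finite. Then the function μ_ℓ(V₁) = 2f(V₁/2) − f(V*(V₁)) − f(V*(V₁) + V₁)
− V*(V₁)·L − M tends to +∞ as V₁ → ∞. Consequently, the set
{V₁ > 0 : μ_ℓ(V₁) < 0} is bounded above, so the blowup time is finite. -/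
theorem stmt_9 (f : ℝ → ℝ)
    (hf_even : ∀ x, f (-x) = f x)
    (hf_conv : StrictConvexOn ℝ Set.univ f)
    (hf_smooth : ContDiff ℝ 1 f)
    (hf_pos : ∀ x, 0 < f x)
    (L : ℝ) (hL : Tendsto (deriv f) atTop (nhds L))
    (M : ℝ) (hM : Tendsto (fun V : ℝ => f (2 * V) - 2 * f V) atTop (nhds M))
    (Vs : ℝ → ℝ)
    (hVs : ∀ V₁ : ℝ, 0 < V₁ → deriv f (Vs V₁) + deriv f (Vs V₁ + V₁) = -L) :
    Tendsto (fun V₁ => 2 * f (V₁ / 2) - f (Vs V₁) - f (Vs V₁ + V₁) - Vs V₁ * L - M)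
      atTop atTop ∧
    BddAbove {V₁ : ℝ | 0 < V₁ ∧
      2 * f (V₁ / 2) - f (Vs V₁) - f (Vs V₁ + V₁) - Vs V₁ * L - M < 0} := by
  have hf_diff : Differentiable ℝ f := hf_smooth.differentiable one_ne_zero
  have hL_pos : 0 < L := pos_of_even_of_tendsto_deriv hf_even hf_conv hf_diff hL
  exact stmt_9_general hf_conv.convexOn hf_diff hL_pos hL_pos hL
    (tendsto_deriv_atBot_of_even hf_even hL) hM hVs
end

section
/- Let V₁ > 0 and suppose there exists some V₂' ≥ V₁ with μ(V₁, V₂') < 0. Then there exists a unique λ > V₁ with μ(V₁, λ) = 0; moreover μ(V₁, V₂) < 0 for every V₂ > λ, and μ(V₁, V₂) > 0 for every V₂ with V₁ ≤ V₂ < λ. (At V₂ = λ the double interval and the triple interval tie.) -/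
open Filter Set

/-!
The equilibrium point minimizes the convex function `x ↦ f x + f (x + V₁) + f (x + V₁ + V₂)`.
Summing tangent-line inequalities at the equilibrium, with both `x` and `V₂` allowed to move, shows
that the slope of `f` at the right end of the triple interval is a subgradient of this minimal value
in `V₂`. That end depends continuously on `V₂`, so the subgradient is a derivative and
`∂μ/∂V₂ = f' ((V₁ + V₂) / 2) - f' (Ṽ + V₁ + V₂)`. For `V₂ > V₁` the right end of the triple lies
beyond that of the double, so `μ V₁` is strictly decreasing on `[V₁, ∞)`; and `μ V₁ V₁ > 0`.
-/

open Asymptotics Topology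

section ConvexAnalysis

theorem deriv_odd_of_even_s11 {𝕜 E : Type*} [NontriviallyNormedField 𝕜] [NormedAddCommGroup E]
    [NormedSpace 𝕜 E] {f : 𝕜 → E} (hf : Function.Even f) : Function.Odd (deriv f) := by
  intro x
  have hcomp : (fun y => f (-y)) = f := funext hf
  rw [eq_neg_iff_add_eq_zero, ← neg_eq_iff_add_eq_zero, ← deriv_comp_neg, hcomp]

theorem map_zero_le_of_convexOn_of_even {E : Type*} [AddCommGroup E] [Module ℝ E] {f : E → ℝ}
    (hconv : ConvexOn ℝ univ f) (heven : Function.Even f) (x : E) : f 0 ≤ f x := by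
  have hmid : f ((1 / 2 : ℝ) • x + (1 / 2 : ℝ) • -x) ≤ (1 / 2 : ℝ) • f x + (1 / 2 : ℝ) • f (-x) :=
    hconv.2 (mem_univ x) (mem_univ (-x)) (by norm_num) (by norm_num) (by norm_num)
  rwa [smul_neg, add_neg_cancel, heven x, ← add_smul, add_halves, one_smul] at hmid

theorem tangentLine_le_of_convexOn {s : Set ℝ} {f : ℝ → ℝ} {f' x y : ℝ} (hconv : ConvexOn ℝ s f)
    (hx : x ∈ s) (hy : y ∈ s) (hf : HasDerivAt f f' x) : f x + f' * (y - x) ≤ f y := by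
  rcases lt_trichotomy x y with hxy | rfl | hyx
  · have hslope := hconv.le_slope_of_hasDerivAt hx hy hxy hf
    rw [slope_def_field, le_div_iff₀ (sub_pos.2 hxy)] at hslope
    linarith
  · simp
  · have hslope := hconv.slope_le_of_hasDerivAt hy hx hyx hf
    rw [slope_def_field, div_le_iff₀ (sub_pos.2 hyx)] at hslope
    linarith

theorem strictMono_deriv_of_strictConvexOn_univ {f : ℝ → ℝ} (hconv : StrictConvexOn ℝ univ f)
    (hdiff : Differentiable ℝ f) : StrictMono (deriv f) :=
  strictMonoOn_univ.1 (hconv.strictMonoOn_deriv fun x _ => hdiff x)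

theorem hasDerivAt_of_subgradient {s : Set ℝ} {g c : ℝ → ℝ} {x : ℝ} (hs : s ∈ 𝓝 x)
    (hsub : ∀ y ∈ s, ∀ z ∈ s, g y + c y * (z - y) ≤ g z) (hc : ContinuousAt c x) :
    HasDerivAt g (c x) x := by
  have hbound : (fun y => g y - g x - (y - x) • c x) =O[𝓝 x] fun y => (c y - c x) * (y - x) := by
    refine IsBigO.of_bound' ?_
    filter_upwards [hs] with y hy
    have hlower := hsub x (mem_of_mem_nhds hs) y hy
    have hupper := hsub y hy x (mem_of_mem_nhds hs)
    rw [smul_eq_mul]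
    exact abs_le_abs_of_nonneg (by linarith) (by linarith)
  have hsmall : (fun y => c y - c x) =o[𝓝 x] fun _ => (1 : ℝ) :=
    (isLittleO_one_iff ℝ).2 (tendsto_sub_nhds_zero_iff.2 hc)
  rw [hasDerivAt_iff_isLittleO]
  simpa only [one_mul] using hbound.trans_isLittleO
    (hsmall.mul_isBigO (isBigO_refl (fun y => y - x) (𝓝 x)))

end ConvexAnalysis

theorem exists_crossing_of_strictAntiOn_Ici {α β : Type*} [ConditionallyCompleteLinearOrder α]
    [TopologicalSpace α] [OrderTopology α] [DenselyOrdered α] [LinearOrder β] [TopologicalSpace β]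
    [OrderClosedTopology β] {g : α → β} {a b : α} {c : β} (hanti : StrictAntiOn g (Ici a))
    (hcont : ContinuousOn g (Ici a)) (ha : c < g a) (hab : a ≤ b) (hb : g b < c) :
    ∃ z, a < z ∧ g z = c ∧ (∀ x, z < x → g x < c) ∧ ∀ x, a ≤ x → x < z → c < g x := by
  obtain ⟨z, ⟨haz, -⟩, rfl⟩ :=
    intermediate_value_Icc' hab (hcont.mono Icc_subset_Ici_self) ⟨hb.le, ha.le⟩
  have hne : a ≠ z := by
    rintro rfl
    exact ha.false
  exact ⟨z, haz.lt_of_ne hne, rfl, fun x hzx => hanti haz (haz.trans hzx.le) hzx,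
    fun x hax hxz => hanti hax haz hxz⟩

/-- The perimeter of the triple interval with left endpoint `x` whose left and right parts have
volumes `V₁` and `V₂`. -/
def triplePerimeter (f : ℝ → ℝ) (V₁ V₂ x : ℝ) : ℝ :=
  f x + f (x + V₁) + f (x + V₁ + V₂)

/-- The first-order condition for `t` to be the left endpoint of the triple interval of least
perimeter with volumes `V₁` and `V₂`; `t = Ṽ(V₁, V₂)` in the paper. -/
def IsEquilibrium (f : ℝ → ℝ) (V₁ V₂ t : ℝ) : Prop :=
  deriv f t + deriv f (t + V₁) + deriv f (t + V₁ + V₂) = 0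

section Equilibrium

variable {f : ℝ → ℝ} {V₁ V₂ W s t : ℝ}

theorem triplePerimeter_subgradient (hconv : ConvexOn ℝ univ f) (hdiff : Differentiable ℝ f)
    (ht : IsEquilibrium f V₁ V₂ t) (W x : ℝ) :
    triplePerimeter f V₁ V₂ t + deriv f (t + V₁ + V₂) * (W - V₂) ≤ triplePerimeter f V₁ W x := by
  have htangent (y z : ℝ) : f y + deriv f y * (z - y) ≤ f z :=
    tangentLine_le_of_convexOn hconv (mem_univ y) (mem_univ z) (hdiff y).hasDerivAt
  have hcancel : (deriv f t + deriv f (t + V₁) + deriv f (t + V₁ + V₂)) * (x - t) = 0 := by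
    rw [ht, zero_mul]
  unfold triplePerimeter
  linarith [htangent t x, htangent (t + V₁) (x + V₁), htangent (t + V₁ + V₂) (x + V₁ + W)]

theorem triplePerimeter_le_of_isEquilibrium (hconv : ConvexOn ℝ univ f)
    (hdiff : Differentiable ℝ f) (ht : IsEquilibrium f V₁ V₂ t) (x : ℝ) :
    triplePerimeter f V₁ V₂ t ≤ triplePerimeter f V₁ V₂ x := by
  simpa only [sub_self, mul_zero, add_zero] using triplePerimeter_subgradient hconv hdiff ht V₂ x

namespace IsEquilibrium

theorem anti (hmono : StrictMono (deriv f)) (ht : IsEquilibrium f V₁ V₂ t)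
    (hs : IsEquilibrium f V₁ W s) (hVW : V₂ ≤ W) : s ≤ t := by
  by_contra! hts
  have hleft := hmono hts
  have hmiddle : deriv f (t + V₁) < deriv f (s + V₁) := hmono (by linarith)
  have hright : deriv f (t + V₁ + V₂) < deriv f (s + V₁ + W) := hmono (by linarith)
  unfold IsEquilibrium at ht hs
  linarith

theorem add_volume_mono (hmono : StrictMono (deriv f)) (ht : IsEquilibrium f V₁ V₂ t)
    (hs : IsEquilibrium f V₁ W s) (hVW : V₂ ≤ W) : t + V₂ ≤ s + W := by
  by_contra! hst
  have hleft : deriv f s < deriv f t := hmono (by linarith)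
  have hmiddle : deriv f (s + V₁) < deriv f (t + V₁) := hmono (by linarith)
  have hright : deriv f (s + V₁ + W) < deriv f (t + V₁ + V₂) := hmono (by linarith)
  unfold IsEquilibrium at ht hs
  linarith

theorem le_add_dist (hmono : StrictMono (deriv f)) (ht : IsEquilibrium f V₁ V₂ t)
    (hs : IsEquilibrium f V₁ W s) : t ≤ s + dist V₂ W := by
  rcases le_total V₂ W with hVW | hWV
  · have hright := ht.add_volume_mono hmono hs hVW
    rw [dist_comm, Real.dist_eq, abs_of_nonneg (sub_nonneg.2 hVW)]
    linarith
  · exact (hs.anti hmono ht hWV).trans (le_add_of_nonneg_right dist_nonneg)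

theorem half_lt_right_endpoint (hmono : StrictMono (deriv f)) (hodd : Function.Odd (deriv f))
    (ht : IsEquilibrium f V₁ V₂ t) (hV : V₁ < V₂) : (V₁ + V₂) / 2 < t + V₁ + V₂ := by
  by_contra! hle
  have hsymm : deriv f t ≤ -deriv f ((V₁ + V₂) / 2) := by
    rw [← hodd]
    exact hmono.monotone (by linarith)
  have hmiddle : deriv f (t + V₁) < 0 := by
    rw [← hodd.map_zero]
    exact hmono (by linarith)
  have hright := hmono.monotone hle
  unfold IsEquilibrium at ht
  linarith

end IsEquilibrium

end Equilibrium

section PerimeterDifference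

variable {f : ℝ → ℝ} {Vt : ℝ → ℝ → ℝ} {V₁ V₂ : ℝ}

theorem mu_eq_sub_triplePerimeter (f : ℝ → ℝ) (Vt : ℝ → ℝ → ℝ) (V₁ V₂ : ℝ) :
    mu f Vt V₁ V₂ =
      2 * f (V₁ / 2) + 2 * f ((V₁ + V₂) / 2) - triplePerimeter f V₁ V₂ (Vt V₁ V₂) := by
  unfold mu triplePerimeter
  ring

theorem mu_self_pos (hconv : ConvexOn ℝ univ f) (heven : Function.Even f)
    (hdiff : Differentiable ℝ f) (hpos : 0 < f 0) (ht : IsEquilibrium f V₁ V₁ (Vt V₁ V₁)) :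
    0 < mu f Vt V₁ V₁ := by
  have hcentered : triplePerimeter f V₁ V₁ (-V₁) = 2 * f V₁ + f 0 := by
    rw [triplePerimeter, neg_add_cancel, zero_add, heven]
    ring
  have hmin := triplePerimeter_le_of_isEquilibrium hconv hdiff ht (-V₁)
  have hzero := map_zero_le_of_convexOn_of_even hconv heven (V₁ / 2)
  rw [mu_eq_sub_triplePerimeter, add_self_div_two]
  linarith

theorem continuousOn_equilibrium (hmono : StrictMono (deriv f)) {s : Set ℝ}
    (ht : ∀ W ∈ s, IsEquilibrium f V₁ W (Vt V₁ W)) : ContinuousOn (Vt V₁) s :=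
  (LipschitzOnWith.of_le_add fun V hV W hW =>
    (ht V hV).le_add_dist hmono (ht W hW)).continuousOn

theorem hasDerivAt_mu (hconv : StrictConvexOn ℝ univ f) (hsmooth : ContDiff ℝ 1 f) {s : Set ℝ}
    (ht : ∀ W ∈ s, IsEquilibrium f V₁ W (Vt V₁ W)) (hs : s ∈ 𝓝 V₂) :
    HasDerivAt (mu f Vt V₁) (deriv f ((V₁ + V₂) / 2) - deriv f (Vt V₁ V₂ + V₁ + V₂)) V₂ := by
  have hdiff : Differentiable ℝ f := hsmooth.differentiable_one
  have hVt : ContinuousAt (Vt V₁) V₂ := (continuousOn_equilibrium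
    (strictMono_deriv_of_strictConvexOn_univ hconv hdiff) ht).continuousAt hs
  have hslope : ContinuousAt (fun W => deriv f (Vt V₁ W + V₁ + W)) V₂ :=
    hsmooth.continuous_deriv_one.continuousAt.comp
      ((hVt.add continuousAt_const).add continuousAt_id)
  have htriple : HasDerivAt (fun W => triplePerimeter f V₁ W (Vt V₁ W))
      (deriv f (Vt V₁ V₂ + V₁ + V₂)) V₂ :=
    hasDerivAt_of_subgradient hs
      (fun V hV W _ => triplePerimeter_subgradient hconv.convexOn hdiff (ht V hV) W _) hslope
  have hhalf : HasDerivAt (fun W : ℝ => (V₁ + W) / 2) (1 / 2) V₂ :=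
    ((hasDerivAt_id V₂).const_add V₁).div_const 2
  have hdouble : HasDerivAt (fun W => 2 * f (V₁ / 2) + 2 * f ((V₁ + W) / 2))
      (deriv f ((V₁ + V₂) / 2)) V₂ :=
    ((((hdiff _).hasDerivAt.comp V₂ hhalf).const_mul 2).const_add _).congr_deriv (by ring)
  rw [funext (mu_eq_sub_triplePerimeter f Vt V₁)]
  exact hdouble.sub htriple

theorem deriv_mu_neg (hconv : StrictConvexOn ℝ univ f) (heven : Function.Even f)
    (hsmooth : ContDiff ℝ 1 f) {s : Set ℝ} (ht : ∀ W ∈ s, IsEquilibrium f V₁ W (Vt V₁ W))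
    (hs : s ∈ 𝓝 V₂) (hV : V₁ < V₂) : deriv (mu f Vt V₁) V₂ < 0 := by
  have hmono := strictMono_deriv_of_strictConvexOn_univ hconv hsmooth.differentiable_one
  have hright := (ht V₂ (mem_of_mem_nhds hs)).half_lt_right_endpoint hmono
    (deriv_odd_of_even_s11 heven) hV
  rw [(hasDerivAt_mu hconv hsmooth ht hs).deriv]
  exact sub_neg.2 (hmono hright)

end PerimeterDifference

/-- Let V₁ > 0 and suppose there exists some V₂' ≥ V₁ with
μ(V₁, V₂') < 0. Then there exists a unique λ > V₁ with μ(V₁, λ) = 0; moreover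
μ(V₁, V₂) < 0 for every V₂ > λ, and μ(V₁, V₂) > 0 for every V₂ with V₁ ≤ V₂ < λ. -/
theorem stmt_11 (f : ℝ → ℝ)
    (hf_even : ∀ x, f (-x) = f x)
    (hf_conv : StrictConvexOn ℝ Set.univ f)
    (hf_smooth : ContDiff ℝ 1 f)
    (hf_pos : ∀ x, 0 < f x)
    (Vt : ℝ → ℝ → ℝ)
    (hVt : ∀ V₁ V₂ : ℝ, 0 < V₁ → 0 < V₂ →
      deriv f (Vt V₁ V₂) + deriv f (Vt V₁ V₂ + V₁) + deriv f (Vt V₁ V₂ + V₁ + V₂) = 0)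
    (V₁ : ℝ) (hV₁ : 0 < V₁)
    (hneg : ∃ V₂' : ℝ, V₁ ≤ V₂' ∧ mu f Vt V₁ V₂' < 0) :
    ∃ lam : ℝ, V₁ < lam ∧ mu f Vt V₁ lam = 0 ∧
      (∀ lam' : ℝ, V₁ < lam' → mu f Vt V₁ lam' = 0 → lam' = lam) ∧
      (∀ V₂ : ℝ, lam < V₂ → mu f Vt V₁ V₂ < 0) ∧
      (∀ V₂ : ℝ, V₁ ≤ V₂ → V₂ < lam → 0 < mu f Vt V₁ V₂) := by
  obtain ⟨V₂', hV₂', hmu_neg⟩ := hneg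
  have ht : ∀ W ∈ Ioi 0, IsEquilibrium f V₁ W (Vt V₁ W) := fun W hW => hVt V₁ W hV₁ hW
  have hnhds : ∀ W, V₁ ≤ W → Ioi 0 ∈ 𝓝 W := fun W hW => Ioi_mem_nhds (hV₁.trans_le hW)
  have hcont : ContinuousOn (mu f Vt V₁) (Ici V₁) := fun W hW =>
    (hasDerivAt_mu hf_conv hf_smooth ht (hnhds W hW)).continuousAt.continuousWithinAt
  have hanti : StrictAntiOn (mu f Vt V₁) (Ici V₁) :=
    strictAntiOn_of_deriv_neg (convex_Ici V₁) hcont fun W hW => by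
      rw [interior_Ici] at hW
      exact deriv_mu_neg hf_conv hf_even hf_smooth ht (hnhds W hW.le) hW
  have hpos : 0 < mu f Vt V₁ V₁ := mu_self_pos hf_conv.convexOn hf_even
    hf_smooth.differentiable_one (hf_pos 0) (ht V₁ hV₁)
  obtain ⟨lam, hlam, hzero, hafter, hbefore⟩ :=
    exists_crossing_of_strictAntiOn_Ici hanti hcont hpos hV₂' hmu_neg
  exact ⟨lam, hlam, hzero,
    fun W hW hWzero => hanti.injOn hW.le hlam.le (hWzero.trans hzero.symm), hafter, hbefore⟩
end

section
/- The following are equivalent: (i) for every V₁ > 0 there exists V₂ ≥ V₁ with μ(V₁, V₂) < 0 (that is, the blowup time V₀ is infinite); (ii) f(2V) − 2f(V) → ∞ as V → ∞ (that is, M = ∞). In particular, if f'(V) → ∞ as V → ∞ then V₀ = ∞. -/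
open Filter Set

/-!
The equilibrium point minimizes the convex function `D x = f x + f (x + V₁) + f (x + V₁ + V₂)`, so
`μ(V₁, V₂) < 0` means that `T = 2 f(V₁/2) + 2 f((V₁+V₂)/2)` lies below every value of `D`, and the
equilibrium equation disappears. Write `W V = f(2V) - 2 f(V)`, which is monotone on `V ≥ 0`.

If `T < D (-V₁) = f(V₁) + f(0) + f(V₂)`, then, increments of `f` being monotone,
`W(V₁/2) + W((V₁+V₂)/2) > f(V₁+V₂) - f(V₂) - f(0) ≥ f(V₁) - 2 f(0)`, which is unbounded in `V₁`.

Conversely, put `y = x + V₁`. When `|y|` is large, `f y > 2 f(V₁/2)` and midpoint convexity bounds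
the two outer terms of `D x`. When `|y| ≤ A`, the term `f (y + V₂) ≥ f (V₂ - A)` dominates by
itself, because `W → ∞` forces `f(2V - B) - 2 f(V) → ∞` for every fixed `B`: either the increments
`f(V+B) - f(V)` are bounded, and the shift by `B` costs a constant, or they tend to infinity, and
their growth alone suffices.
-/

section Convex

section Field

variable {𝕜 : Type*} [Field 𝕜] [LinearOrder 𝕜] [IsStrictOrderedRing 𝕜] {s : Set 𝕜} {f : 𝕜 → 𝕜}

lemma two_mul_map_midpoint_le_of_convexOn (hf : ConvexOn 𝕜 s f) {x y : 𝕜} (hx : x ∈ s)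
    (hy : y ∈ s) : 2 * f ((x + y) / 2) ≤ f x + f y := by
  have hhalf : (0 : 𝕜) ≤ 1 / 2 := by positivity
  have h := hf.2 hx hy hhalf hhalf (add_halves 1)
  have hmid : (1 / 2 : 𝕜) • x + (1 / 2 : 𝕜) • y = (x + y) / 2 := by
    simp only [smul_eq_mul]; ring
  rw [hmid, smul_eq_mul, smul_eq_mul] at h
  linarith

lemma map_add_sub_le_map_add_sub_of_convexOn (hf : ConvexOn 𝕜 s f) {x y d : 𝕜} (hx : x ∈ s)
    (hyd : y + d ∈ s) (hxy : x ≤ y) (hd : 0 ≤ d) : f (x + d) - f x ≤ f (y + d) - f y := by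
  rcases hd.eq_or_lt with rfl | hd
  · simp only [add_zero, sub_self, le_refl]
  have hL : 0 < y + d - x := by linarith
  -- `x + d` and `y` are the convex combinations of `x` and `y + d` with exchanged weights.
  set a := (y - x) / (y + d - x)
  set b := d / (y + d - x)
  have ha : 0 ≤ a := div_nonneg (sub_nonneg.2 hxy) hL.le
  have hb : 0 ≤ b := div_nonneg hd.le hL.le
  have hab : a + b = 1 := by simp only [a, b]; field_simp; ring
  have hxd := hf.2 hx hyd ha hb hab
  have hy := hf.2 hx hyd hb ha (add_comm a b ▸ hab)
  have hxd_eq : a • x + b • (y + d) = x + d := by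
    simp only [a, b, smul_eq_mul]; field_simp; ring
  have hy_eq : b • x + a • (y + d) = y := by
    simp only [a, b, smul_eq_mul]; field_simp; ring
  rw [hxd_eq] at hxd
  rw [hy_eq] at hy
  simp only [smul_eq_mul] at hxd hy
  linear_combination hxd + hy + (f x + f (y + d)) * hab

end Field

variable {f : ℝ → ℝ}

lemma tendsto_atTop_of_convexOn_of_lt {a b : ℝ} (hf : ConvexOn ℝ (Ici a) f) (hab : a < b)
    (hlt : f a < f b) : Tendsto f atTop atTop := by
  have hslope : 0 < (f b - f a) / (b - a) := div_pos (sub_pos.2 hlt) (sub_pos.2 hab)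
  have hline : Tendsto (fun y => f b + (f b - f a) / (b - a) * (y - b)) atTop atTop :=
    tendsto_atTop_add_const_left _ _
      ((tendsto_atTop_add_const_right _ (-b) tendsto_id).const_mul_atTop hslope)
  refine tendsto_atTop_mono' _ ?_ hline
  filter_upwards [eventually_gt_atTop b] with y hy
  have h := hf.slope_mono_adjacent self_mem_Ici (hab.trans hy).le hab hy
  rw [le_div_iff₀ (sub_pos.2 hy)] at h
  linarith

lemma tendsto_map_two_mul_sub_of_tendsto_increment (hf : ConvexOn ℝ univ f) {c : ℝ} (B : ℝ)
    (hc : Tendsto (fun V => f (V + c) - f V) atTop atTop) :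
    Tendsto (fun V => f (2 * V - B) - 2 * f V) atTop atTop := by
  refine tendsto_atTop_mono' _ ?_ (tendsto_atTop_add_const_right _ (-f (B + c)) hc)
  filter_upwards [eventually_ge_atTop B, eventually_ge_atTop (B + c)] with V hB hBc
  have h := map_add_sub_le_map_add_sub_of_convexOn hf (mem_univ (B + c)) (mem_univ _)
    (by linarith : B + c ≤ V + c) (sub_nonneg.2 hBc)
  rw [add_sub_cancel, show V + c + (V - (B + c)) = 2 * V - B by ring] at h
  linarith

lemma tendsto_map_two_mul_sub_of_tendsto_map_two_mul (hf : ConvexOn ℝ univ f) {B : ℝ} (hB : 0 ≤ B)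
    (hW : Tendsto (fun V => f (2 * V) - 2 * f V) atTop atTop) :
    Tendsto (fun V => f (2 * V - B) - 2 * f V) atTop atTop := by
  have hmono : Monotone fun V => f (V + B) - f V := fun _ _ hxy =>
    map_add_sub_le_map_add_sub_of_convexOn hf (mem_univ _) (mem_univ _) hxy hB
  rcases tendsto_atTop_of_monotone hmono with htop | ⟨L, hL⟩
  · exact tendsto_map_two_mul_sub_of_tendsto_increment hf B htop
  · refine tendsto_atTop_mono (fun V => ?_) (tendsto_atTop_add_const_right _ (-L) hW)
    have h : f (2 * V - B + B) - f (2 * V - B) ≤ L := hmono.ge_of_tendsto hL (2 * V - B)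
    rw [sub_add_cancel] at h
    linarith

lemma tendsto_map_two_mul_of_tendsto_deriv (hf : ConvexOn ℝ univ f) (hd : Differentiable ℝ f)
    (hderiv : Tendsto (deriv f) atTop atTop) :
    Tendsto (fun V => f (2 * V) - 2 * f V) atTop atTop := by
  have hincr : Tendsto (fun V => f (V + 1) - f V) atTop atTop := by
    refine tendsto_atTop_mono (fun V => ?_) hderiv
    have h := hf.deriv_le_slope (mem_univ V) (mem_univ (V + 1)) (lt_add_one V) (hd V)
    rwa [slope_def_field, add_sub_cancel_left, div_one] at h
  simpa only [sub_zero] using tendsto_map_two_mul_sub_of_tendsto_increment hf 0 hincr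

lemma monotoneOn_map_two_mul_sub_two_mul (hf : ConvexOn ℝ (Ici 0) f) :
    MonotoneOn (fun V => f (2 * V) - 2 * f V) (Ici 0) := by
  intro a (ha : 0 ≤ a) b (hb : 0 ≤ b) hab
  have hd : 0 ≤ b - a := sub_nonneg.2 hab
  have h₁ := map_add_sub_le_map_add_sub_of_convexOn hf ha
    (mem_Ici.2 (by linarith : 0 ≤ 2 * a + (b - a))) (by linarith) hd
  have h₂ := map_add_sub_le_map_add_sub_of_convexOn hf ha
    (mem_Ici.2 (by linarith : 0 ≤ a + b + (b - a))) (by linarith) hd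
  rw [add_sub_cancel, show 2 * a + (b - a) = a + b by ring] at h₁
  rw [add_sub_cancel, show a + b + (b - a) = 2 * b by ring] at h₂
  linarith

end Convex

lemma map_abs_of_even {α β : Type*} [AddGroup α] [LinearOrder α] {f : α → β} (heven : f.Even)
    (x : α) : f |x| = f x := by
  rcases abs_choice x with h | h <;> rw [h]
  exact heven x

section EvenConvex

variable {𝕜 : Type*} [Field 𝕜] [LinearOrder 𝕜] [IsStrictOrderedRing 𝕜] {f : 𝕜 → 𝕜}

lemma map_zero_le_of_even_of_convexOn (heven : f.Even) (hf : ConvexOn 𝕜 univ f) (x : 𝕜) :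
    f 0 ≤ f x := by
  have h := two_mul_map_midpoint_le_of_convexOn hf (mem_univ x) (mem_univ (-x))
  rw [add_neg_cancel, zero_div, heven x] at h
  linarith

lemma map_zero_lt_of_even_of_strictConvexOn (heven : f.Even) (hf : StrictConvexOn 𝕜 univ f)
    {x : 𝕜} (hx : x ≠ 0) : f 0 < f x := by
  refine (map_zero_le_of_even_of_convexOn heven hf.convexOn x).lt_of_ne fun h => hx ?_
  refine hf.eq_of_isMinOn (fun y _ => ?_) (fun y _ => ?_) (mem_univ x) (mem_univ 0)
  · exact h ▸ map_zero_le_of_even_of_convexOn heven hf.convexOn y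
  · exact map_zero_le_of_even_of_convexOn heven hf.convexOn y

lemma monotoneOn_Ici_of_even_of_convexOn (heven : f.Even) (hf : ConvexOn 𝕜 univ f) :
    MonotoneOn f (Ici 0) := by
  intro x (hx : 0 ≤ x) y _ hxy
  have h := map_add_sub_le_map_add_sub_of_convexOn hf (mem_univ (-y)) (mem_univ (x + (y - x)))
    (by linarith) (sub_nonneg.2 hxy)
  rw [show -y + (y - x) = -x by ring, add_sub_cancel, heven x, heven y] at h
  linarith

end EvenConvex

lemma tendsto_atTop_of_even_of_convexOn_of_ne {f : ℝ → ℝ} (heven : f.Even)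
    (hf : ConvexOn ℝ univ f) {x : ℝ} (hx : f x ≠ f 0) : Tendsto f atTop atTop := by
  have hpos : 0 < |x| := abs_pos.2 fun h => hx (congrArg f h)
  refine tendsto_atTop_of_convexOn_of_lt (hf.subset (subset_univ _) (convex_Ici 0)) hpos ?_
  rw [map_abs_of_even heven]
  exact (map_zero_le_of_even_of_convexOn heven hf x).lt_of_ne' hx

/-- The perimeter of the double interval whose regions `[x, x + V₁]` and `[x + V₁, x + V₁ + V₂]`
share the endpoint `x + V₁`, as a function of its left endpoint. -/
def doubleIntervalPerimeter (f : ℝ → ℝ) (V₁ V₂ x : ℝ) : ℝ :=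
  f x + f (x + V₁) + f (x + V₁ + V₂)

/-- The perimeter of the symmetric triple interval: the central region `[-V₁/2, V₁/2]` has volume
`V₁`, and the second region consists of two flanking intervals of volume `V₂/2`. Each pair of
opposite endpoints is counted through `f (-x) = f x`. -/
noncomputable def tripleIntervalPerimeter (f : ℝ → ℝ) (V₁ V₂ : ℝ) : ℝ :=
  2 * f (V₁ / 2) + 2 * f ((V₁ + V₂) / 2)

section Perimeter

variable {f : ℝ → ℝ} {V₁ V₂ : ℝ}

lemma convexOn_doubleIntervalPerimeter (hf : ConvexOn ℝ univ f) :
    ConvexOn ℝ univ (doubleIntervalPerimeter f V₁ V₂) := by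
  have hsum : doubleIntervalPerimeter f V₁ V₂ =
      f + f ∘ (fun x => x + V₁) + f ∘ (fun x => x + (V₁ + V₂)) := by
    funext x
    simp only [doubleIntervalPerimeter, Pi.add_apply, Function.comp_apply, add_assoc]
  rw [hsum]
  exact (hf.add (hf.translate_left V₁)).add (hf.translate_left (V₁ + V₂))

lemma hasDerivAt_doubleIntervalPerimeter (hd : Differentiable ℝ f) (x : ℝ) :
    HasDerivAt (doubleIntervalPerimeter f V₁ V₂)
      (deriv f x + deriv f (x + V₁) + deriv f (x + V₁ + V₂)) x :=
  ((hd x).hasDerivAt.add ((hd (x + V₁)).hasDerivAt.comp_add_const x V₁)).add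
    (((hd (x + V₁ + V₂)).hasDerivAt.comp_add_const (x + V₁) V₂).comp_add_const x V₁)

lemma isMinOn_doubleIntervalPerimeter (hf : ConvexOn ℝ univ f) (hd : Differentiable ℝ f) {x : ℝ}
    (hx : deriv f x + deriv f (x + V₁) + deriv f (x + V₁ + V₂) = 0) :
    IsMinOn (doubleIntervalPerimeter f V₁ V₂) univ x := by
  refine (convexOn_doubleIntervalPerimeter hf).isMinOn_of_rightDeriv_eq_zero (by simp) ?_
  rw [← hx]
  exact (hasDerivAt_doubleIntervalPerimeter hd x).hasDerivWithinAt.derivWithin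
    (uniqueDiffWithinAt_Ioi x)

lemma mu_eq_triple_sub_double (Vt : ℝ → ℝ → ℝ) :
    mu f Vt V₁ V₂ =
      tripleIntervalPerimeter f V₁ V₂ - doubleIntervalPerimeter f V₁ V₂ (Vt V₁ V₂) := by
  simp only [mu, tripleIntervalPerimeter, doubleIntervalPerimeter]
  ring

lemma mu_neg_iff_forall_triple_lt_double (hf : ConvexOn ℝ univ f) (hd : Differentiable ℝ f)
    {Vt : ℝ → ℝ → ℝ} (hVt : deriv f (Vt V₁ V₂) + deriv f (Vt V₁ V₂ + V₁)
      + deriv f (Vt V₁ V₂ + V₁ + V₂) = 0) :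
    mu f Vt V₁ V₂ < 0 ↔
      ∀ x, tripleIntervalPerimeter f V₁ V₂ < doubleIntervalPerimeter f V₁ V₂ x := by
  rw [mu_eq_triple_sub_double, sub_neg]
  exact ⟨fun h x => h.trans_le (isMinOn_doubleIntervalPerimeter hf hd hVt (mem_univ x)),
    fun h => h _⟩

lemma lt_two_mul_map_sub_of_triple_lt_double (heven : f.Even) (hf : ConvexOn ℝ univ f)
    (hV₁ : 0 ≤ V₁) (hV₂ : 0 ≤ V₂)
    (hlt : tripleIntervalPerimeter f V₁ V₂ < doubleIntervalPerimeter f V₁ V₂ (-V₁)) :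
    f V₁ - 2 * f 0 < 2 * (f (V₁ + V₂) - 2 * f ((V₁ + V₂) / 2)) := by
  rw [tripleIntervalPerimeter, doubleIntervalPerimeter, heven, neg_add_cancel, zero_add] at hlt
  have hincr := map_add_sub_le_map_add_sub_of_convexOn hf (mem_univ 0) (mem_univ _) hV₂ hV₁
  have hmono := monotoneOn_map_two_mul_sub_two_mul (hf.subset (subset_univ _) (convex_Ici 0))
    (mem_Ici.2 (by linarith : 0 ≤ V₁ / 2)) (mem_Ici.2 (by linarith : 0 ≤ (V₁ + V₂) / 2))
    (by linarith)
  simp only [mul_div_cancel₀ _ (two_ne_zero' ℝ)] at hmono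
  rw [zero_add, add_comm V₂] at hincr
  linarith

lemma tendsto_of_forall_exists_triple_lt_double (heven : f.Even) (hf : ConvexOn ℝ univ f)
    (htop : Tendsto f atTop atTop)
    (h : ∀ V₁, 0 < V₁ → ∃ V₂, V₁ ≤ V₂ ∧
      tripleIntervalPerimeter f V₁ V₂ < doubleIntervalPerimeter f V₁ V₂ (-V₁)) :
    Tendsto (fun V => f (2 * V) - 2 * f V) atTop atTop := by
  refine tendsto_atTop.2 fun M => ?_
  obtain ⟨V₁, hM, hV₁⟩ :=
    ((htop.eventually_ge_atTop (2 * M + 2 * f 0)).and (eventually_gt_atTop 0)).exists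
  obtain ⟨V₂, hV₁₂, hlt⟩ := h V₁ hV₁
  have hW := lt_two_mul_map_sub_of_triple_lt_double heven hf hV₁.le (hV₁.le.trans hV₁₂) hlt
  have hhalf : 0 ≤ (V₁ + V₂) / 2 := by linarith
  filter_upwards [eventually_ge_atTop ((V₁ + V₂) / 2)] with V hV
  have hmono := monotoneOn_map_two_mul_sub_two_mul (hf.subset (subset_univ _) (convex_Ici 0))
    hhalf (hhalf.trans hV) hV
  simp only [mul_div_cancel₀ _ (two_ne_zero' ℝ)] at hmono
  linarith

lemma triple_lt_double_of_lt_map (heven : f.Even) (hf : ConvexOn ℝ univ f) {x : ℝ}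
    (hx : 2 * f (V₁ / 2) < f (x + V₁)) :
    tripleIntervalPerimeter f V₁ V₂ < doubleIntervalPerimeter f V₁ V₂ x := by
  have h := two_mul_map_midpoint_le_of_convexOn hf (mem_univ (-x)) (mem_univ (x + V₁ + V₂))
  rw [show -x + (x + V₁ + V₂) = V₁ + V₂ by ring, heven] at h
  rw [tripleIntervalPerimeter, doubleIntervalPerimeter]
  linarith

lemma triple_lt_double_of_abs_le (heven : f.Even) (hf : ConvexOn ℝ univ f) {A x : ℝ}
    (hAV₂ : A ≤ V₂) (hx : |x + V₁| ≤ A)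
    (hA : 2 * f (V₁ / 2) - 2 * f 0 < f (V₂ - A) - 2 * f ((V₁ + V₂) / 2)) :
    tripleIntervalPerimeter f V₁ V₂ < doubleIntervalPerimeter f V₁ V₂ x := by
  have hleft : V₂ - A ≤ x + V₁ + V₂ := by linarith [neg_le_of_abs_le hx]
  have hV₂A : 0 ≤ V₂ - A := sub_nonneg.2 hAV₂
  have hmono := monotoneOn_Ici_of_even_of_convexOn heven hf hV₂A (hV₂A.trans hleft) hleft
  have h₀ := map_zero_le_of_even_of_convexOn heven hf x
  have h₁ := map_zero_le_of_even_of_convexOn heven hf (x + V₁)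
  rw [tripleIntervalPerimeter, doubleIntervalPerimeter]
  linarith

lemma eventually_forall_triple_lt_double (heven : f.Even) (hf : ConvexOn ℝ univ f)
    (htop : Tendsto f atTop atTop) (hV₁ : 0 ≤ V₁)
    (hW : Tendsto (fun V => f (2 * V) - 2 * f V) atTop atTop) :
    ∀ᶠ V₂ in atTop, ∀ x, tripleIntervalPerimeter f V₁ V₂ < doubleIntervalPerimeter f V₁ V₂ x := by
  obtain ⟨A, hA₀, hA⟩ := ((eventually_ge_atTop 0).and
    (htop.eventually_gt_atTop (2 * f (V₁ / 2)))).exists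
  have hshift : Tendsto (fun V₂ => f (V₂ - A) - 2 * f ((V₁ + V₂) / 2)) atTop atTop := by
    have hhalf : Tendsto (fun V₂ => (V₁ + V₂) / 2) atTop atTop :=
      (tendsto_atTop_add_const_left _ V₁ tendsto_id).atTop_div_const two_pos
    refine ((tendsto_map_two_mul_sub_of_tendsto_map_two_mul hf (add_nonneg hV₁ hA₀) hW).comp
      hhalf).congr fun V₂ => ?_
    simp only [Function.comp_apply, mul_div_cancel₀ _ (two_ne_zero' ℝ), add_sub_add_left_eq_sub]
  filter_upwards [eventually_ge_atTop A,
    hshift.eventually_gt_atTop (2 * f (V₁ / 2) - 2 * f 0)] with V₂ hAV₂ hlarge x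
  rcases le_total |x + V₁| A with hx | hx
  · exact triple_lt_double_of_abs_le heven hf hAV₂ hx hlarge
  · refine triple_lt_double_of_lt_map heven hf (hA.trans_le ?_)
    have hmono := monotoneOn_Ici_of_even_of_convexOn heven hf hA₀ (hA₀.trans hx) hx
    rwa [map_abs_of_even heven] at hmono

end Perimeter

theorem stmt_15_general (f : ℝ → ℝ) (heven : f.Even) (hf : ConvexOn ℝ univ f)
    (hd : Differentiable ℝ f) (hne : ∃ x, f x ≠ f 0) (Vt : ℝ → ℝ → ℝ)
    (hVt : ∀ V₁ V₂ : ℝ, 0 < V₁ → 0 < V₂ →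
      deriv f (Vt V₁ V₂) + deriv f (Vt V₁ V₂ + V₁) + deriv f (Vt V₁ V₂ + V₁ + V₂) = 0) :
    ((∀ V₁ : ℝ, 0 < V₁ → ∃ V₂ : ℝ, V₁ ≤ V₂ ∧ mu f Vt V₁ V₂ < 0) ↔
      Tendsto (fun V : ℝ => f (2 * V) - 2 * f V) atTop atTop) ∧
    (Tendsto (deriv f) atTop atTop →
      ∀ V₁ : ℝ, 0 < V₁ → ∃ V₂ : ℝ, V₁ ≤ V₂ ∧ mu f Vt V₁ V₂ < 0) := by
  obtain ⟨x, hx⟩ := hne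
  have htop := tendsto_atTop_of_even_of_convexOn_of_ne heven hf hx
  have hmu : ∀ {V₁ V₂ : ℝ}, 0 < V₁ → V₁ ≤ V₂ → (mu f Vt V₁ V₂ < 0 ↔
      ∀ x, tripleIntervalPerimeter f V₁ V₂ < doubleIntervalPerimeter f V₁ V₂ x) :=
    fun hV₁ hV₁₂ => mu_neg_iff_forall_triple_lt_double hf hd (hVt _ _ hV₁ (hV₁.trans_le hV₁₂))
  have hiff : (∀ V₁ : ℝ, 0 < V₁ → ∃ V₂ : ℝ, V₁ ≤ V₂ ∧ mu f Vt V₁ V₂ < 0) ↔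
      Tendsto (fun V : ℝ => f (2 * V) - 2 * f V) atTop atTop := by
    constructor
    · refine fun h => tendsto_of_forall_exists_triple_lt_double heven hf htop fun V₁ hV₁ => ?_
      obtain ⟨V₂, hV₁₂, hneg⟩ := h V₁ hV₁
      exact ⟨V₂, hV₁₂, (hmu hV₁ hV₁₂).1 hneg (-V₁)⟩
    · intro hW V₁ hV₁
      obtain ⟨V₂, hV₁₂, hlt⟩ := ((eventually_ge_atTop V₁).and
        (eventually_forall_triple_lt_double heven hf htop hV₁.le hW)).exists
      exact ⟨V₂, hV₁₂, (hmu hV₁ hV₁₂).2 hlt⟩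
  exact ⟨hiff, fun hderiv => hiff.2 (tendsto_map_two_mul_of_tendsto_deriv hf hd hderiv)⟩

/-- The following are equivalent: (i) for every V₁ > 0 there exists
V₂ ≥ V₁ with μ(V₁, V₂) < 0 (that is, the blowup time V₀ is infinite);
(ii) f(2V) − 2f(V) → ∞ as V → ∞ (that is, M = ∞). In particular, if f'(V) → ∞ as
V → ∞ then V₀ = ∞. -/
theorem stmt_15 (f : ℝ → ℝ)
    (hf_even : ∀ x, f (-x) = f x)
    (hf_conv : StrictConvexOn ℝ Set.univ f)
    (hf_smooth : ContDiff ℝ 1 f)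
    (hf_pos : ∀ x, 0 < f x)
    (Vt : ℝ → ℝ → ℝ)
    (hVt : ∀ V₁ V₂ : ℝ, 0 < V₁ → 0 < V₂ →
      deriv f (Vt V₁ V₂) + deriv f (Vt V₁ V₂ + V₁) + deriv f (Vt V₁ V₂ + V₁ + V₂) = 0) :
    ((∀ V₁ : ℝ, 0 < V₁ → ∃ V₂ : ℝ, V₁ ≤ V₂ ∧ mu f Vt V₁ V₂ < 0) ↔
      Tendsto (fun V : ℝ => f (2 * V) - 2 * f V) atTop atTop) ∧
    (Tendsto (deriv f) atTop atTop →
      ∀ V₁ : ℝ, 0 < V₁ → ∃ V₂ : ℝ, V₁ ≤ V₂ ∧ mu f Vt V₁ V₂ < 0) :=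
  stmt_15_general f hf_even hf_conv.convexOn (hf_smooth.differentiable one_ne_zero)
    ⟨1, (map_zero_lt_of_even_of_strictConvexOn hf_even hf_conv one_ne_zero).ne'⟩ Vt hVt
end

section
/- Let f(V) = |V| + e^{−|V|}. Then f is even, positive, continuously differentiable, and strictly convex; it satisfies L = lim_{V→∞} f'(V) = 1, M = lim_{V→∞} (f(2V) − 2f(V)) = 0, the unique V̄ with f'(V̄) = 1/2 is V̄ = log 2, and 2f(0) − 2f(log 2) + (log 2)·1 − 0 = 1 − log 2 ≥ 0. Consequently, for this density μ(V₁, V₂) > 0 for all 0 < V₁ ≤ V₂, i.e. the blowup time V₀ equals 0. -/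
open Filter Set Real

/-- The density f(V) = |V| + e^{−|V|}. -/
noncomputable def fEx17 (V : ℝ) : ℝ := |V| + Real.exp (-|V|)

/-!
The equilibrium condition says that `v = Ṽ` is a critical point of the convex function
`v ↦ f v + f (v + V₁) + f (v + V₁ + V₂)`, so `Ṽ` minimizes the perimeter of the triple interval.
Comparing with the triple with boundary points `-V₁`, `0`, `V₂`, it is enough to show
`f V₁ + f 0 + f V₂ < 2 f (V₁ / 2) + 2 f ((V₁ + V₂) / 2)`. For `f V = |V| + e^{-|V|}`, with
`p = e^{-V₁/2}` and `q = e^{-V₂/2}` in `(0, 1]`, the bound `V₁ ≥ 2 (1 - p)` reduces this to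
`(p - q)² < 1`.
-/

section CompAbs

variable {φ : ℝ → ℝ}

lemma hasDerivAt_comp_abs (hφ : Differentiable ℝ φ) (h₀ : deriv φ 0 = 0) (x : ℝ) :
    HasDerivAt (fun x ↦ φ |x|) (deriv φ x⁺ - deriv φ x⁻) x := by
  rcases lt_trichotomy x 0 with hx | rfl | hx
  · have h := (hφ |x|).hasDerivAt.comp x (hasDerivAt_abs_neg hx)
    rw [posPart_of_nonpos hx.le, negPart_of_nonpos hx.le, h₀, ← abs_of_neg hx]
    exact h.congr_deriv (by ring)
  · have h : (fun t ↦ φ t - φ 0) =o[nhds 0] fun t ↦ t := by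
      simpa [h₀, hasDerivAt_iff_isLittleO] using (hφ 0).hasDerivAt
    have h_abs : (fun x ↦ φ |x| - φ 0) =o[nhds 0] fun x : ℝ ↦ |x| :=
      h.comp_tendsto (continuous_abs.tendsto' 0 0 abs_zero)
    simpa [hasDerivAt_iff_isLittleO] using h_abs.of_abs_right
  · have h := (hφ |x|).hasDerivAt.comp x (hasDerivAt_abs_pos hx)
    rw [posPart_of_nonneg hx.le, negPart_of_nonneg hx.le, h₀]
    rw [abs_of_pos hx] at h
    exact h.congr_deriv (by ring)

lemma deriv_comp_abs (hφ : Differentiable ℝ φ) (h₀ : deriv φ 0 = 0) :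
    deriv (fun x ↦ φ |x|) = fun x ↦ deriv φ x⁺ - deriv φ x⁻ :=
  funext fun x ↦ (hasDerivAt_comp_abs hφ h₀ x).deriv

lemma contDiff_one_comp_abs (hφ : ContDiff ℝ 1 φ) (h₀ : deriv φ 0 = 0) :
    ContDiff ℝ 1 (fun x ↦ φ |x|) := by
  obtain ⟨hφ, hφ'⟩ := contDiff_one_iff_deriv.mp hφ
  refine contDiff_one_iff_deriv.mpr
    ⟨fun x ↦ (hasDerivAt_comp_abs hφ h₀ x).differentiableAt, ?_⟩
  rw [deriv_comp_abs hφ h₀]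
  exact (hφ'.comp continuous_posPart).sub (hφ'.comp continuous_negPart)

lemma strictMono_deriv_comp_abs (hφ : Differentiable ℝ φ) (h₀ : deriv φ 0 = 0)
    (hφ' : StrictMonoOn (deriv φ) (Ici 0)) : StrictMono (deriv fun x ↦ φ |x|) := by
  rw [deriv_comp_abs hφ h₀]
  refine strictMono_of_odd_strictMonoOn_nonneg (fun x ↦ by simp) fun x hx y hy hxy ↦ ?_
  rw [mem_Ici] at hx hy
  simpa [posPart_of_nonneg, negPart_of_nonneg, hx, hy] using hφ' hx hy hxy

end CompAbs

section Equilibrium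

variable {f : ℝ → ℝ}

lemma isMinOn_sum_translates {ι : Type*} {s : Finset ι} {a : ι → ℝ} {v : ℝ}
    (hf : ConvexOn ℝ univ f) (hd : ∀ i ∈ s, DifferentiableAt ℝ f (v + a i))
    (hv : ∑ i ∈ s, deriv f (v + a i) = 0) :
    IsMinOn (fun w ↦ ∑ i ∈ s, f (w + a i)) univ v := by
  have hconv : ConvexOn ℝ univ fun w ↦ ∑ i ∈ s, f (w + a i) := by
    simpa only [Finset.sum_fn] using Finset.sum_induction (fun i w ↦ f (w + a i)) (ConvexOn ℝ univ)
      (fun _ _ ↦ ConvexOn.add) (convexOn_const 0 convex_univ) fun i _ ↦ hf.translate_left (a i)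
  have hderiv : HasDerivAt (fun w ↦ ∑ i ∈ s, f (w + a i)) 0 v := by
    rw [← hv]
    exact HasDerivAt.fun_sum fun i hi ↦ (hd i hi).hasDerivAt.comp_add_const v (a i)
  exact hconv.isMinOn_of_rightDeriv_eq_zero (by simp)
    (hderiv.hasDerivWithinAt.derivWithin (uniqueDiffWithinAt_Ioi v))

lemma mu_pos_of_add_add_lt {Vt : ℝ → ℝ → ℝ} {V₁ V₂ w : ℝ} (hf : ConvexOn ℝ univ f)
    (hd : Differentiable ℝ f)
    (hVt : deriv f (Vt V₁ V₂) + deriv f (Vt V₁ V₂ + V₁) + deriv f (Vt V₁ V₂ + V₁ + V₂) = 0)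
    (hw : f w + f (w + V₁) + f (w + V₁ + V₂) < 2 * f (V₁ / 2) + 2 * f ((V₁ + V₂) / 2)) :
    0 < mu f Vt V₁ V₂ := by
  have hmin := isMinOn_sum_translates (s := Finset.univ) (a := ![0, V₁, V₁ + V₂]) hf
    (fun _ _ ↦ hd _) (by simpa [Fin.sum_univ_three, add_assoc] using hVt)
  have hle : f (Vt V₁ V₂) + f (Vt V₁ V₂ + V₁) + f (Vt V₁ V₂ + V₁ + V₂) ≤
      f w + f (w + V₁) + f (w + V₁ + V₂) := by
    simpa [Fin.sum_univ_three, add_assoc] using isMinOn_univ_iff.mp hmin w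
  unfold mu
  linarith

end Equilibrium

lemma deriv_id_add_exp_neg : deriv (fun t : ℝ ↦ t + exp (-t)) = fun t ↦ 1 - exp (-t) :=
  funext fun t ↦ (((hasDerivAt_id' t).fun_add (hasDerivAt_neg t).exp).congr_deriv (by ring)).deriv

lemma fEx17_of_nonneg {x : ℝ} (hx : 0 ≤ x) : fEx17 x = x + exp (-x) := by
  rw [fEx17, abs_of_nonneg hx]

lemma fEx17_neg (x : ℝ) : fEx17 (-x) = fEx17 x := by
  rw [fEx17, fEx17, abs_neg]

lemma fEx17_pos (x : ℝ) : 0 < fEx17 x := by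
  unfold fEx17
  positivity

lemma contDiff_fEx17 : ContDiff ℝ 1 fEx17 :=
  contDiff_one_comp_abs (φ := fun t ↦ t + exp (-t)) (by fun_prop) (by simp [deriv_id_add_exp_neg])

lemma deriv_fEx17_of_nonneg {x : ℝ} (hx : 0 ≤ x) : deriv fEx17 x = 1 - exp (-x) := by
  have h : deriv fEx17 x = _ := congrFun (deriv_comp_abs (φ := fun t ↦ t + exp (-t)) (by fun_prop)
    (by simp [deriv_id_add_exp_neg])) x
  simpa [deriv_id_add_exp_neg, posPart_of_nonneg hx, negPart_of_nonneg hx] using h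

lemma strictMono_deriv_fEx17 : StrictMono (deriv fEx17) := by
  refine strictMono_deriv_comp_abs (φ := fun t ↦ t + exp (-t)) (by fun_prop)
    (by simp [deriv_id_add_exp_neg]) fun x _ y _ hxy ↦ ?_
  simpa [deriv_id_add_exp_neg] using hxy

lemma strictConvexOn_fEx17 : StrictConvexOn ℝ univ fEx17 :=
  strictMono_deriv_fEx17.strictConvexOn_univ_of_deriv contDiff_fEx17.continuous

lemma tendsto_deriv_fEx17_atTop : Tendsto (deriv fEx17) atTop (nhds 1) := by
  have h : Tendsto (fun V : ℝ ↦ 1 - exp (-V)) atTop (nhds 1) := by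
    simpa using tendsto_exp_neg_atTop_nhds_zero.const_sub 1
  refine h.congr' ?_
  filter_upwards [eventually_ge_atTop 0] with V hV
  exact (deriv_fEx17_of_nonneg hV).symm

lemma tendsto_fEx17_two_mul_sub_atTop :
    Tendsto (fun V ↦ fEx17 (2 * V) - 2 * fEx17 V) atTop (nhds 0) := by
  have h : Tendsto (fun V : ℝ ↦ exp (-V) ^ 2 - 2 * exp (-V)) atTop (nhds 0) := by
    simpa using (tendsto_exp_neg_atTop_nhds_zero.pow 2).sub
      (tendsto_exp_neg_atTop_nhds_zero.const_mul 2)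
  refine h.congr' ?_
  filter_upwards [eventually_ge_atTop 0] with V hV
  have hexp : exp (-(2 * V)) = exp (-V) ^ 2 := by
    rw [← exp_nat_mul]
    push_cast
    ring_nf
  rw [fEx17_of_nonneg hV, fEx17_of_nonneg (by positivity), hexp]
  ring

lemma exp_neg_log_two : exp (-log 2) = 1 / 2 := by
  rw [exp_neg, exp_log two_pos, one_div]

lemma deriv_fEx17_log_two : deriv fEx17 (log 2) = 1 / 2 := by
  rw [deriv_fEx17_of_nonneg (log_nonneg one_le_two), exp_neg_log_two]
  norm_num

lemma two_mul_fEx17_zero_sub_log_two :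
    2 * fEx17 0 - 2 * fEx17 (log 2) + log 2 * 1 - 0 = 1 - log 2 := by
  rw [fEx17_of_nonneg le_rfl, fEx17_of_nonneg (log_nonneg one_le_two), exp_neg_log_two, neg_zero,
    exp_zero]
  ring

lemma fEx17_add_add_lt {x y : ℝ} (hx : 0 ≤ x) (hy : 0 ≤ y) :
    fEx17 x + fEx17 0 + fEx17 y < 2 * fEx17 (x / 2) + 2 * fEx17 ((x + y) / 2) := by
  rw [fEx17_of_nonneg hx, fEx17_of_nonneg le_rfl, fEx17_of_nonneg hy,
    fEx17_of_nonneg (by positivity), fEx17_of_nonneg (by positivity), neg_zero, exp_zero]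
  set p := exp (-(x / 2)) with hp
  set q := exp (-(y / 2)) with hq
  have exp_neg_x : exp (-x) = p ^ 2 := by rw [hp, sq, ← exp_add]; ring_nf
  have exp_neg_y : exp (-y) = q ^ 2 := by rw [hq, sq, ← exp_add]; ring_nf
  have exp_neg_mid : exp (-((x + y) / 2)) = p * q := by rw [hp, hq, ← exp_add]; ring_nf
  have p_pos : 0 < p := exp_pos _
  have q_pos : 0 < q := exp_pos _
  have p_le : p ≤ 1 := exp_le_one_iff.mpr (by linarith)
  have q_le : q ≤ 1 := exp_le_one_iff.mpr (by linarith)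
  have x_ge : 1 - x / 2 ≤ p := one_sub_le_exp_neg _
  have sq_lt : (p - q) ^ 2 < 1 :=
    (sq_lt_one_iff_abs_lt_one _).mpr (abs_lt.mpr ⟨by linarith, by linarith⟩)
  rw [exp_neg_x, exp_neg_y, exp_neg_mid]
  linarith

lemma mu_fEx17_pos {Vt : ℝ → ℝ → ℝ} {V₁ V₂ : ℝ} (hV₁ : 0 ≤ V₁) (hV₂ : 0 ≤ V₂)
    (hVt : deriv fEx17 (Vt V₁ V₂) + deriv fEx17 (Vt V₁ V₂ + V₁)
      + deriv fEx17 (Vt V₁ V₂ + V₁ + V₂) = 0) :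
    0 < mu fEx17 Vt V₁ V₂ :=
  mu_pos_of_add_add_lt (w := -V₁) strictConvexOn_fEx17.convexOn
    (contDiff_fEx17.differentiable one_ne_zero) hVt
    (by simpa [fEx17_neg] using fEx17_add_add_lt hV₁ hV₂)

theorem stmt_17_general :
    (∀ x, fEx17 (-x) = fEx17 x) ∧
    (∀ x, 0 < fEx17 x) ∧
    ContDiff ℝ 1 fEx17 ∧
    StrictConvexOn ℝ univ fEx17 ∧
    Tendsto (deriv fEx17) atTop (nhds 1) ∧
    Tendsto (fun V : ℝ ↦ fEx17 (2 * V) - 2 * fEx17 V) atTop (nhds 0) ∧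
    (deriv fEx17 (log 2) = 1 / 2 ∧ ∀ V : ℝ, deriv fEx17 V = 1 / 2 → V = log 2) ∧
    (2 * fEx17 0 - 2 * fEx17 (log 2) + log 2 * 1 - 0 = 1 - log 2 ∧ 0 ≤ 1 - log 2) ∧
    (∀ (Vt : ℝ → ℝ → ℝ) (V₁ V₂ : ℝ), 0 ≤ V₁ → 0 ≤ V₂ →
      deriv fEx17 (Vt V₁ V₂) + deriv fEx17 (Vt V₁ V₂ + V₁)
        + deriv fEx17 (Vt V₁ V₂ + V₁ + V₂) = 0 →
      0 < mu fEx17 Vt V₁ V₂) := by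
  refine ⟨fEx17_neg, fEx17_pos, contDiff_fEx17, strictConvexOn_fEx17, tendsto_deriv_fEx17_atTop,
    tendsto_fEx17_two_mul_sub_atTop, ⟨deriv_fEx17_log_two, fun V hV ↦ ?_⟩,
    ⟨two_mul_fEx17_zero_sub_log_two, ?_⟩, fun _ _ _ hV₁ hV₂ hVt ↦ mu_fEx17_pos hV₁ hV₂ hVt⟩
  · exact strictMono_deriv_fEx17.injective (hV.trans deriv_fEx17_log_two.symm)
  · linarith [log_le_sub_one_of_pos (two_pos (α := ℝ))]

/-- Let f(V) = |V| + e^{−|V|}. Then f is even, positive, continuously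
differentiable, and strictly convex; it satisfies L = lim_{V→∞} f'(V) = 1,
M = lim_{V→∞} (f(2V) − 2f(V)) = 0, the unique V̄ with f'(V̄) = 1/2 is V̄ = log 2,
and 2f(0) − 2f(log 2) + (log 2)·1 − 0 = 1 − log 2 ≥ 0. Consequently, for this
density μ(V₁, V₂) > 0 for all 0 < V₁ ≤ V₂, i.e. the blowup time V₀ equals 0. -/
theorem stmt_17 :
    (∀ x, fEx17 (-x) = fEx17 x) ∧
    (∀ x, 0 < fEx17 x) ∧
    ContDiff ℝ 1 fEx17 ∧
    StrictConvexOn ℝ Set.univ fEx17 ∧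
    Tendsto (deriv fEx17) atTop (nhds 1) ∧
    Tendsto (fun V : ℝ => fEx17 (2 * V) - 2 * fEx17 V) atTop (nhds 0) ∧
    (deriv fEx17 (Real.log 2) = 1 / 2 ∧
      ∀ V : ℝ, deriv fEx17 V = 1 / 2 → V = Real.log 2) ∧
    (2 * fEx17 0 - 2 * fEx17 (Real.log 2) + Real.log 2 * 1 - 0 = 1 - Real.log 2 ∧
      0 ≤ 1 - Real.log 2) ∧
    (∀ Vt : ℝ → ℝ → ℝ,
      (∀ V₁ V₂ : ℝ, 0 < V₁ → 0 < V₂ →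
        deriv fEx17 (Vt V₁ V₂) + deriv fEx17 (Vt V₁ V₂ + V₁)
          + deriv fEx17 (Vt V₁ V₂ + V₁ + V₂) = 0) →
      ∀ V₁ V₂ : ℝ, 0 < V₁ → V₁ ≤ V₂ → 0 < mu fEx17 Vt V₁ V₂) := by
  obtain ⟨h_even, h_pos, h_C1, h_convex, hL, hM, h_half, h_log, h_mu⟩ := stmt_17_general
  exact ⟨h_even, h_pos, h_C1, h_convex, hL, hM, h_half, h_log, fun Vt hVt V₁ V₂ h₁ h₁₂ ↦
    h_mu Vt V₁ V₂ h₁.le (h₁.le.trans h₁₂) (hVt V₁ V₂ h₁ (h₁.trans_le h₁₂))⟩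
end
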